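/- Let p : SO(n+1) → Sⁿ be the canonical fiber bundle (quotient by SO(n)). Then the composite π_{n+1}(S^{n+1}) → π_n(SO(n+1)) → π_n(Sⁿ) obtained from the boundary map of the fibration SO(n+1) → SO(n+2) → S^{n+1} followed by p_* is, for n odd, multiplication by 2 under the identifications π_{n+1}(S^{n+1}) ≅ ℤ ≅ π_n(Sⁿ). -/

import Mathlib

open Matrix

set_option synthInstance.maxHeartbeats 1000000
set_option maxHeartbeats 1000000

/-- The map induced by a continuous map `f : X → Y` on homotopy groups,
`f_* : π_N(X, x) → π_N(Y, f x)`, given by postcomposition. -/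
def piMap {N X Y : Type*} [TopologicalSpace X] [TopologicalSpace Y] {x : X}
    (f : C(X, Y)) : HomotopyGroup N X x → HomotopyGroup N Y (f x) :=
  Quotient.map
    (fun p => ⟨f.comp p.1, fun y hy => by
      simp only [ContinuousMap.comp_apply, p.2 y hy]⟩)
    (fun p q h => Nonempty.map (fun H => H.compContinuousMap f) h)

set_option linter.unusedSectionVars false

namespace Steenrod
open scoped unitInterval Topology Topology.Homotopy
open GenLoop

/-! ### Generalities on homotopy groups -/

section general
variable {N X Y : Type*} [TopologicalSpace X] [TopologicalSpace Y] {x : X}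

/-- The class of a generalized loop. -/
def cl (f : Ω^ N X x) : HomotopyGroup N X x := ⟦f⟧

theorem cl_surj (a : HomotopyGroup N X x) : ∃ f, cl f = a := Quotient.exists_rep a

theorem cl_eq_of_homotopy {f g : Ω^ N X x} (H : I × (I^N) → X) (hH : Continuous H)
    (h0 : ∀ y, H (0, y) = f y) (h1 : ∀ y, H (1, y) = g y)
    (hb : ∀ t, ∀ y ∈ Cube.boundary N, H (t, y) = x) : cl f = cl g := by
  apply Quotient.sound
  refine ⟨⟨⟨⟨H, hH⟩, h0, h1⟩, ?_⟩⟩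
  intro t y hy
  exact (hb t y hy).trans (f.2 y hy).symm

theorem homotopy_of_cl_eq {f g : Ω^ N X x} (h : cl f = cl g) :
    ∃ H : I × (I^N) → X, Continuous H ∧ (∀ y, H (0, y) = f y) ∧ (∀ y, H (1, y) = g y) ∧
      (∀ t, ∀ y ∈ Cube.boundary N, H (t, y) = x) := by
  obtain ⟨H⟩ := Quotient.exact h
  refine ⟨H, H.continuous, H.apply_zero, H.apply_one, fun t y hy => ?_⟩
  exact (H.eq_fst t hy).trans (f.2 y hy)

variable [DecidableEq N] [Nonempty N]

theorem cl_mul (i : N) (p q : Ω^ N X x) : cl p * cl q = cl (transAt i q p) :=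
  HomotopyGroup.mul_spec

theorem cl_inv (i : N) (p : Ω^ N X x) : (cl p)⁻¹ = cl (symmAt i p) :=
  HomotopyGroup.inv_spec

theorem one_eq_cl : (1 : HomotopyGroup N X x) = cl const := rfl

theorem transAt_apply (i : N) (f g : Ω^ N X x) (t : I^N) :
    transAt i f g t = if (t i : ℝ) ≤ 1 / 2
      then f (Function.update t i <| Set.projIcc 0 1 zero_le_one (2 * t i))
      else g (Function.update t i <| Set.projIcc 0 1 zero_le_one (2 * t i - 1)) := rfl

theorem symmAt_apply (i : N) (f : Ω^ N X x) (t : I^N) :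
    symmAt i f t = f fun j ↦ if j = i then σ (t i) else t j := rfl

theorem piMap_cl (f : C(X, Y)) (p : Ω^ N X x) (g : Ω^ N Y (f x)) (h : ∀ y, g y = f (p y)) :
    piMap f (cl p) = cl g := by
  have : g = ⟨f.comp p.1, fun y hy => by
      simp only [ContinuousMap.comp_apply, p.2 y hy]⟩ := by
    ext y; exact h y
  rw [this]; rfl

/-- Postcomposition on generalized loops. -/
def postc (f : C(X, Y)) (p : Ω^ N X x) : Ω^ N Y (f x) :=
  ⟨f.comp p.1, fun y hy => by simp only [ContinuousMap.comp_apply, p.2 y hy]⟩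

theorem postc_apply (f : C(X, Y)) (p : Ω^ N X x) (y) : postc f p y = f (p y) := rfl

theorem piMap_cl' (f : C(X, Y)) (p : Ω^ N X x) : piMap f (cl p) = cl (postc f p) := rfl

theorem piMap_mul (f : C(X, Y)) (a b : HomotopyGroup N X x) :
    piMap f (a * b) = piMap f a * piMap f b := by
  obtain ⟨a, rfl⟩ := cl_surj a
  obtain ⟨b, rfl⟩ := cl_surj b
  let i : N := Classical.arbitrary N
  rw [cl_mul i, piMap_cl', piMap_cl', piMap_cl', cl_mul i]
  congr 1
  ext y
  rw [postc_apply, transAt_apply, transAt_apply]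
  split_ifs <;> rfl

/-- `piMap` as a homomorphism. -/
noncomputable def piHom (f : C(X, Y)) : HomotopyGroup N X x →* HomotopyGroup N Y (f x) :=
  MonoidHom.mk' (piMap f) (piMap_mul f)

theorem cl_split (i : N) (t : I) (f fl fr : Ω^ N X x)
    (hl : ∀ y, fl y = f (Function.update y i (t * y i)))
    (hr : ∀ y, fr y = f (Function.update y i (σ (σ t * σ (y i))))) :
    cl f = cl fr * cl fl := by
  rw [cl_mul i]
  have ht0 := t.2.1
  have ht1 := t.2.2
  let ρ : ℝ → ℝ := fun s => t * min (2 * s) 1 + (1 - t) * max (2 * s - 1) 0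
  have hρ0 : ρ 0 = 0 := by simp [ρ]
  have hρ1 : ρ 1 = 1 := by norm_num [ρ]
  let ρI : I × I → I := fun z => Set.projIcc 0 1 zero_le_one ((1 - (z.1 : ℝ)) * z.2 + z.1 * ρ z.2)
  have hc : Continuous ρI := by
    refine continuous_projIcc.comp ?_
    simp only [ρ]
    fun_prop
  refine cl_eq_of_homotopy (fun z => f (Function.update z.2 i (ρI (z.1, z.2 i)))) ?_ ?_ ?_ ?_
  · refine (map_continuous f).comp ?_
    refine Continuous.update continuous_snd i ?_
    exact hc.comp (by fun_prop)
  · intro y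
    have : ρI (0, y i) = y i := by
      simp [ρI]
    simp [this]
  · intro y
    rw [transAt_apply]
    have h0 := (y i).2.1
    have h1 := (y i).2.2
    split_ifs with h
    · rw [hl]
      simp only [Function.update_idem, Function.update_self]
      congr 2
      apply Subtype.ext
      have e1 : ((Set.projIcc (0:ℝ) 1 zero_le_one (2 * (y i : ℝ)) : I) : ℝ) = 2 * y i := by
        rw [Set.coe_projIcc, min_eq_right (by linarith), max_eq_right (by linarith)]
      rw [Set.Icc.coe_mul, e1]
      simp only [ρI, ρ, Set.coe_projIcc]
      rw [min_eq_left (by linarith : 2 * (y i : ℝ) ≤ 1), max_eq_right (by linarith : 2 * (y i : ℝ) - 1 ≤ 0)]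
      have : (1 - ((1 : I) : ℝ)) * (y i) + (1 : I) * (↑t * (2 * (y i:ℝ)) + (1 - ↑t) * 0) = t * (2 * y i) := by
        simp
      rw [this, min_eq_right (by nlinarith), max_eq_right (by nlinarith)]
    · rw [hr]
      push Not at h
      simp only [Function.update_idem, Function.update_self]
      congr 2
      apply Subtype.ext
      have e1 : ((Set.projIcc (0:ℝ) 1 zero_le_one (2 * (y i : ℝ) - 1) : I) : ℝ) = 2 * y i - 1 := by
        rw [Set.coe_projIcc, min_eq_right (by linarith), max_eq_right (by linarith)]
      rw [unitInterval.coe_symm_eq, Set.Icc.coe_mul, unitInterval.coe_symm_eq, unitInterval.coe_symm_eq, e1]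
      simp only [ρI, ρ, Set.coe_projIcc]
      rw [min_eq_right (by linarith : (1:ℝ) ≤ 2 * (y i : ℝ)), max_eq_left (by linarith : 0 ≤ 2 * (y i : ℝ) - 1)]
      have : (1 - ((1 : I) : ℝ)) * (y i) + (1 : I) * (↑t * 1 + (1 - ↑t) * (2 * (y i : ℝ) - 1)) =
        1 - (1 - t) * (1 - (2 * y i - 1)) := by
        simp; ring
      rw [this, min_eq_right (by nlinarith), max_eq_right (by nlinarith)]
  · rintro s y ⟨k, hk⟩
    apply f.2
    refine ⟨k, ?_⟩
    by_cases hki : k = i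
    · subst hki
      simp only [Function.update_self]
      rcases hk with hk | hk
      · left
        simp [ρI, hk, hρ0]
      · right
        simp [ρI, hk, hρ1]
    · simpa [Function.update_of_ne hki] using hk

end general

/-- In a cyclic group, a generator of the subgroup generated by the square of a
generator is itself the square of a generator. -/
theorem exists_sq_generator {G : Type*} [Group G] (i c : G)
    (hi : Subgroup.zpowers i = ⊤) (hc : Subgroup.zpowers c = Subgroup.zpowers (i * i)) :
    ∃ b, Subgroup.zpowers b = ⊤ ∧ c = b * b := by
  obtain ⟨a, ha⟩ : c ∈ Subgroup.zpowers (i * i) := hc ▸ Subgroup.mem_zpowers c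
  obtain ⟨k, hk⟩ : i * i ∈ Subgroup.zpowers c := hc ▸ Subgroup.mem_zpowers (i * i)
  simp only at ha hk
  have hii : i * i = i ^ (2 : ℤ) := by rw [zpow_two]
  rw [hii, ← _root_.zpow_mul] at ha
  have hN : (orderOf i : ℤ) ∣ 2 * (a * k - 1) := by
    rw [orderOf_dvd_iff_zpow_eq_one]
    rw [← ha, ← _root_.zpow_mul, hii] at hk
    have : (2 * (a * k - 1) : ℤ) = 2 * a * k - 2 := by ring
    rw [this, _root_.zpow_sub, hk, mul_inv_cancel]
  obtain ⟨a', h1, h2⟩ : ∃ a' : ℤ, (orderOf i : ℤ) ∣ 2 * (a' - a) ∧ IsCoprime a' (orderOf i : ℤ) := by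
    generalize (orderOf i : ℤ) = M at hN
    have hd : IsCoprime a (a * k - 1) := ⟨k, -1, by ring⟩
    rcases Int.even_or_odd a with hae | hao
    · have hdo : Odd (a * k - 1) := by
        rw [Int.odd_sub]; simp [hae]
      rcases Int.even_or_odd M with hM | hM
      · obtain ⟨M', rfl⟩ := hM
        rw [← two_mul] at hN ⊢
        have hM' : M' ∣ a * k - 1 := Int.dvd_of_mul_dvd_mul_left (by norm_num) hN
        have hM'o : Odd M' := by
          rcases Int.even_or_odd M' with h | h
          · exact absurd ((h.two_dvd.trans hM')) (by rwa [← even_iff_two_dvd, Int.not_even_iff_odd])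
          · exact h
        refine ⟨a + M', ⟨1, by ring⟩, ?_⟩
        apply IsCoprime.mul_right
        · have : Odd (a + M') := hae.add_odd hM'o
          obtain ⟨r, hr⟩ := this
          exact ⟨1, -r, by rw [hr]; ring⟩
        · have := hd.of_isCoprime_of_dvd_right hM'
          simpa using this.add_mul_left_left 1
      · refine ⟨a, by simp, ?_⟩
        have h2 : IsCoprime M 2 := by
          obtain ⟨r, hr⟩ := hM
          exact ⟨1, -r, by rw [hr]; ring⟩
        exact hd.of_isCoprime_of_dvd_right (h2.dvd_of_dvd_mul_left hN)
    · refine ⟨a, by simp, ?_⟩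
      have h2 : IsCoprime a 2 := by
        obtain ⟨r, hr⟩ := hao
        exact ⟨1, -r, by rw [hr]; ring⟩
      exact (h2.mul_right hd).of_isCoprime_of_dvd_right hN
  refine ⟨i ^ a', ?_, ?_⟩
  · rw [eq_top_iff, ← hi, Subgroup.zpowers_le]
    obtain ⟨u, v, huv⟩ := h2
    refine ⟨u, ?_⟩
    simp only
    have : i ^ (u * a' + v * (orderOf i : ℤ)) = i := by rw [huv, zpow_one]
    rw [_root_.zpow_add, mul_comm v, _root_.zpow_mul i (orderOf i : ℤ), zpow_natCast, pow_orderOf_eq_one, _root_.one_zpow, mul_one] at this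
    rw [← _root_.zpow_mul, mul_comm]; exact this
  · rw [orderOf_dvd_iff_zpow_eq_one, mul_sub, _root_.zpow_sub, mul_inv_eq_one] at h1
    rw [← ha, ← h1, ← _root_.zpow_add, two_mul]

end Steenrod

namespace Steenrod
open scoped unitInterval Topology Topology.Homotopy
open GenLoop

/-! ### Maps of cubes to the punctured Euclidean space and their classes -/

/-- The unit sphere of dimension `n`. -/
abbrev S (n : ℕ) := Metric.sphere (0 : EuclideanSpace ℝ (Fin (n+1))) 1

/-- The base point of the sphere. -/
noncomputable def e0 (n : ℕ) : S n := ⟨EuclideanSpace.single 0 1, by simp⟩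

variable {n : ℕ}

/-- Assemble a vector from its first coordinate and the remaining ones. -/
def emb (y : ℝ × (Fin n → ℝ)) : EuclideanSpace ℝ (Fin (n+1)) :=
  WithLp.toLp 2 (Fin.cons y.1 y.2 : Fin (n+1) → ℝ)

theorem continuous_emb : Continuous (emb (n := n)) := by
  unfold emb
  refine (PiLp.continuous_toLp 2 _).comp ?_
  refine continuous_pi fun i => ?_
  refine Fin.cases ?_ (fun j => ?_) i
  · simpa using continuous_fst
  · simp only [Fin.cons_succ]
    fun_prop

theorem emb_eq_zero {y : ℝ × (Fin n → ℝ)} : emb y = 0 ↔ y = 0 := by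
  constructor
  · intro h
    have h' : ∀ i, emb y i = 0 := fun i => by rw [h]; rfl
    ext i
    · exact h' 0
    · exact h' (Fin.succ i)
  · rintro rfl
    ext i
    refine Fin.cases ?_ (fun j => ?_) i <;> simp [emb]

open Classical in
/-- Radial projection to the sphere. -/
noncomputable def mkS (y : ℝ × (Fin n → ℝ)) : S n :=
  if h : emb y = 0 then e0 n else ⟨‖emb y‖⁻¹ • emb y, by
    have : ‖emb y‖ ≠ 0 := norm_ne_zero_iff.mpr h
    simp [norm_smul, this]⟩

theorem coe_mkS {y : ℝ × (Fin n → ℝ)} (h : y ≠ 0) :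
    (mkS y : EuclideanSpace ℝ (Fin (n+1))) = ‖emb y‖⁻¹ • emb y := by
  unfold mkS
  rw [dif_neg (by rwa [emb_eq_zero])]

theorem continuous_mkS {T : Type*} [TopologicalSpace T] {G : T → ℝ × (Fin n → ℝ)}
    (hG : Continuous G) (h : ∀ t, G t ≠ 0) : Continuous fun t => mkS (G t) := by
  rw [Topology.IsInducing.subtypeVal.continuous_iff]
  have : (Subtype.val ∘ fun t => mkS (G t)) = fun t => ‖emb (G t)‖⁻¹ • emb (G t) := by
    funext t
    exact coe_mkS (h t)
  rw [this]
  have h1 := continuous_emb.comp hG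
  refine Continuous.smul (Continuous.inv₀ h1.norm fun t => ?_) h1
  exact norm_ne_zero_iff.mpr (by simpa [emb_eq_zero] using h t)

theorem mkS_pos_smul {c : ℝ} (hc : 0 < c) {y z : ℝ × (Fin n → ℝ)} (hy : y ≠ 0)
    (h : z = c • y) : mkS z = mkS y := by
  subst h
  have hz : c • y ≠ 0 := smul_ne_zero hc.ne' hy
  apply Subtype.ext
  rw [coe_mkS hy, coe_mkS hz]
  have : emb (c • y) = c • emb y := by
    ext i
    refine Fin.cases ?_ (fun j => ?_) i <;> simp [emb]
  have hn : ‖emb y‖ ≠ 0 := norm_ne_zero_iff.mpr (by rwa [Ne, emb_eq_zero])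
  rw [this, norm_smul, Real.norm_of_nonneg hc.le, smul_smul]
  congr 1
  field_simp

theorem mkS_base {c : ℝ} (hc : 0 < c) : mkS ((c, 0) : ℝ × (Fin n → ℝ)) = e0 n := by
  have h1 : ((1, 0) : ℝ × (Fin n → ℝ)) ≠ 0 := by
    intro h; simpa using congrArg Prod.fst h
  rw [mkS_pos_smul hc h1 (by simp)]
  apply Subtype.ext
  rw [coe_mkS h1]
  have : emb ((1, 0) : ℝ × (Fin n → ℝ)) = EuclideanSpace.single 0 1 := by
    ext i
    refine Fin.cases ?_ (fun j => ?_) i <;> simp [emb]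
  rw [this]
  simp [e0]

/-- The point of `ℝ × ℝⁿ` given by a point of the sphere. -/
def unS (p : S n) : ℝ × (Fin n → ℝ) := (p.1 0, fun i => p.1 i.succ)

theorem emb_unS (p : S n) : emb (unS p) = p.1 := by
  ext i
  refine Fin.cases ?_ (fun j => ?_) i <;> simp [emb, unS]

theorem unS_ne (p : S n) : unS p ≠ 0 := by
  intro h
  rw [← emb_eq_zero, emb_unS] at h
  have := p.2
  simp [h] at this

theorem mkS_unS (p : S n) : mkS (unS p) = p := by
  apply Subtype.ext
  rw [coe_mkS (unS_ne p), emb_unS]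
  have := p.2
  simp at this
  simp

theorem continuous_unS : Continuous (unS (n := n)) := by
  unfold unS
  fun_prop

theorem unS_e0 : unS (e0 n) = (1, 0) := by
  ext i <;> simp [unS, e0]

/-- The crushing map: points close to the positive axis in a sense controlled by `C` are pushed
to the axis. -/
noncomputable def crush (C : ℝ) (y : ℝ × (Fin n → ℝ)) : ℝ × (Fin n → ℝ) :=
  (y.1 + C * ‖y.2‖, max 0 (1 - C * (y.1 + C * ‖y.2‖)) • y.2)

theorem crush_ne {C : ℝ} {y : ℝ × (Fin n → ℝ)} (hy : y ≠ 0) : crush C y ≠ 0 := by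
  intro h
  have h1 : y.1 + C * ‖y.2‖ = 0 := congrArg Prod.fst h
  have h2 : max 0 (1 - C * (y.1 + C * ‖y.2‖)) • y.2 = 0 := congrArg Prod.snd h
  rw [h1] at h2
  simp at h2
  rw [h2] at h1
  simp at h1
  exact hy (Prod.ext h1 h2)

theorem crush_zero (y : ℝ × (Fin n → ℝ)) : crush 0 y = y := by
  simp [crush]

theorem mkS_crush_eq {C : ℝ} (hC : 0 ≤ C) {y : ℝ × (Fin n → ℝ)}
    (h : 1 ≤ C * (y.1 + C * ‖y.2‖)) : mkS (crush C y) = e0 n := by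
  have hpos : 0 < y.1 + C * ‖y.2‖ := by
    by_contra hneg
    push Not at hneg
    nlinarith [mul_nonneg hC (neg_nonneg.mpr hneg)]
  unfold crush
  rw [max_eq_left (by linarith), zero_smul]
  exact mkS_base hpos

theorem mkS_crush_eq' {C : ℝ} {y : ℝ × (Fin n → ℝ)}
    (h1 : 0 < y.1) (h2 : y.2 = 0) : mkS (crush C y) = e0 n := by
  unfold crush
  rw [h2, smul_zero, norm_zero, mul_zero, add_zero]
  exact mkS_base h1

theorem continuous_crush {T : Type*} [TopologicalSpace T] {G : T → ℝ × (Fin n → ℝ)} {c : T → ℝ}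
    (hG : Continuous G) (hc : Continuous c) : Continuous fun t => crush (c t) (G t) := by
  unfold crush
  fun_prop

theorem crush_mono {C D a b : ℝ} (hC : 0 ≤ C) (hCD : C ≤ D) (hb : 0 ≤ b)
    (h : 1 ≤ C * (a + C * b)) : 1 ≤ D * (a + D * b) := by
  have hpos : 0 < a + C * b := by
    by_contra hneg
    push Not at hneg
    nlinarith [mul_nonneg hC (neg_nonneg.mpr hneg)]
  have : a + C * b ≤ a + D * b := by nlinarith
  calc 1 ≤ C * (a + C * b) := h
    _ ≤ D * (a + C * b) := by nlinarith
    _ ≤ D * (a + D * b) := by nlinarith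

theorem exists_crush {T : Type*} [TopologicalSpace T] {K : Set T} (hK : IsCompact K)
    {G : T → ℝ × (Fin n → ℝ)} (hG : Continuous G)
    (h : ∀ t ∈ K, (G t).2 = 0 → 0 < (G t).1) :
    ∃ C0 : ℝ, 0 ≤ C0 ∧ ∀ C, C0 ≤ C → ∀ t ∈ K, 1 ≤ C * ((G t).1 + C * ‖(G t).2‖) := by
  let U : ℕ → Set T := fun k => {t | 1 < (k : ℝ) * ((G t).1 + k * ‖(G t).2‖)}
  have hU : ∀ k, IsOpen (U k) := fun k => isOpen_lt continuous_const (by fun_prop)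
  have hcov : K ⊆ ⋃ k, U k := by
    intro t ht
    rw [Set.mem_iUnion]
    by_cases h2 : (G t).2 = 0
    · have h1 := h t ht h2
      obtain ⟨k, hk⟩ := exists_nat_gt (1 / (G t).1)
      refine ⟨k, ?_⟩
      simp only [U, Set.mem_ofPred_eq, h2, norm_zero, mul_zero, add_zero]
      rwa [div_lt_iff₀ h1] at hk
    · have hb : 0 < ‖(G t).2‖ := norm_pos_iff.mpr h2
      obtain ⟨k, hk⟩ := exists_nat_gt (max 1 ((1 + 1 + |(G t).1|) / ‖(G t).2‖))
      refine ⟨k, ?_⟩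
      have hk1 : (1:ℝ) < k := lt_of_le_of_lt (le_max_left _ _) hk
      have hk2 := lt_of_le_of_lt (le_max_right _ _) hk
      rw [div_lt_iff₀ hb] at hk2
      have := neg_abs_le (G t).1
      simp only [U, Set.mem_ofPred_eq]
      nlinarith
  obtain ⟨k, hk⟩ := hK.elim_directed_cover U hU hcov (by
    refine directed_of_isDirected_le ?_
    intro a b hab t ht
    simp only [U, Set.mem_ofPred_eq] at ht ⊢
    have ha : (0:ℝ) ≤ a := Nat.cast_nonneg a
    have hab' : (a:ℝ) ≤ b := Nat.cast_le.mpr hab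
    have hb := norm_nonneg (G t).2
    have hpos : 0 < (G t).1 + a * ‖(G t).2‖ := by
      by_contra hneg
      push Not at hneg
      nlinarith [mul_nonneg ha (neg_nonneg.mpr hneg)]
    have : (G t).1 + a * ‖(G t).2‖ ≤ (G t).1 + b * ‖(G t).2‖ := by nlinarith
    calc 1 < (a:ℝ) * ((G t).1 + a * ‖(G t).2‖) := ht
      _ ≤ b * ((G t).1 + a * ‖(G t).2‖) := by nlinarith
      _ ≤ b * ((G t).1 + b * ‖(G t).2‖) := by nlinarith)
  refine ⟨k, Nat.cast_nonneg k, fun C hC t ht => ?_⟩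
  exact crush_mono (Nat.cast_nonneg k) hC (norm_nonneg _) (le_of_lt (hk ht))

/-- The unit cube as a subset of `ℝⁿ`. -/
def Q (n : ℕ) : Set (Fin n → ℝ) := {x | ∀ i, x i ∈ Set.Icc (0:ℝ) 1}

/-- The faces of the unit cube. -/
def bdy (n : ℕ) : Set (Fin n → ℝ) := {x | ∃ i, x i = 0 ∨ x i = 1}

theorem isCompact_Q : IsCompact (Q n) := by
  have : Q n = Set.Icc 0 1 := by
    ext x
    simp [Q, Set.mem_Icc, Pi.le_def, forall_and]
  rw [this]
  exact isCompact_Icc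

theorem isClosed_bdy : IsClosed (bdy n) := by
  have : bdy n = ⋃ i, {x | x i = 0 ∨ x i = 1} := by
    ext x; simp [bdy]
  rw [this]
  refine isClosed_iUnion_of_finite fun i => ?_
  exact (isClosed_eq (by fun_prop) (by fun_prop)).union (isClosed_eq (by fun_prop) (by fun_prop))

/-- Inclusion of the cube. -/
def cc (y : I^(Fin n)) : Fin n → ℝ := fun i => y i

/-- Projection to the cube. -/
noncomputable def pj (x : Fin n → ℝ) : I^(Fin n) := fun i => Set.projIcc 0 1 zero_le_one (x i)

theorem cc_mem (y : I^(Fin n)) : cc y ∈ Q n := fun i => (y i).2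

theorem cc_bdy {y : I^(Fin n)} (h : y ∈ Cube.boundary (Fin n)) : cc y ∈ bdy n := by
  obtain ⟨i, hi⟩ := h
  refine ⟨i, ?_⟩
  rcases hi with hi | hi <;> simp [cc, hi]

theorem pj_cc (y : I^(Fin n)) : pj (cc y) = y := by
  funext i; simp [pj, cc]

theorem continuous_cc : Continuous (cc (n := n)) := by unfold cc; fun_prop

theorem continuous_pj : Continuous (pj (n := n)) := by
  unfold pj
  exact continuous_pi fun i => continuous_projIcc.comp (continuous_apply i)

theorem pj_bdy {x : Fin n → ℝ} (hx : x ∈ bdy n) : pj x ∈ Cube.boundary (Fin n) := by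
  obtain ⟨i, hi⟩ := hx
  refine ⟨i, ?_⟩
  rcases hi with hi | hi <;> simp [pj, hi]

theorem cc_pj {x : Fin n → ℝ} (hx : x ∈ Q n) : cc (pj x) = x := by
  funext i
  simp [cc, pj, Set.projIcc_of_mem _ (hx i)]

/-- Admissible maps: nonvanishing on the cube, and on the boundary they avoid the closed
negative half-axis. -/
structure Adm (F : (Fin n → ℝ) → ℝ × (Fin n → ℝ)) : Prop where
  cont : Continuous F
  ne : ∀ x ∈ Q n, F x ≠ 0
  bd : ∀ x ∈ Q n, x ∈ bdy n → (F x).2 = 0 → 0 < (F x).1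

/-- `a` is the homotopy class of the (crushed) map `F`. -/
def Cls (F : (Fin n → ℝ) → ℝ × (Fin n → ℝ)) (a : HomotopyGroup (Fin n) (S n) (e0 n)) : Prop :=
  ∃ C0 : ℝ, 0 ≤ C0 ∧ ∀ C, C0 ≤ C → ∃ g : Ω^ (Fin n) (S n) (e0 n),
    (∀ y, g y = mkS (crush C (F (cc y)))) ∧ cl g = a

theorem Cls.unique {F : (Fin n → ℝ) → ℝ × (Fin n → ℝ)} {a b} (ha : Cls F a) (hb : Cls F b) :
    a = b := by
  obtain ⟨C, -, h⟩ := ha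
  obtain ⟨D, -, h'⟩ := hb
  obtain ⟨g, hg, rfl⟩ := h (max C D) (le_max_left _ _)
  obtain ⟨g', hg', rfl⟩ := h' (max C D) (le_max_right _ _)
  congr 1
  ext y : 1
  rw [hg, hg']

theorem Adm.exists_loop {F : (Fin n → ℝ) → ℝ × (Fin n → ℝ)} (hF : Adm F) :
    ∃ C0 : ℝ, 0 ≤ C0 ∧ (∀ C, C0 ≤ C → ∀ x ∈ Q n, x ∈ bdy n → mkS (crush C (F x)) = e0 n) ∧
     ∀ C, C0 ≤ C → ∃ g : Ω^ (Fin n) (S n) (e0 n),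
      (∀ y, g y = mkS (crush C (F (cc y)))) := by
  obtain ⟨C0, h0, h⟩ := exists_crush (isCompact_Q.inter_right (isClosed_bdy (n := n))) hF.cont
    (fun t ht => hF.bd t ht.1 ht.2)
  have key : ∀ C, C0 ≤ C → ∀ x ∈ Q n, x ∈ bdy n → mkS (crush C (F x)) = e0 n :=
    fun C hC x hx hb => mkS_crush_eq (h0.trans hC) (h C hC x ⟨hx, hb⟩)
  refine ⟨C0, h0, key, fun C hC => ?_⟩
  refine ⟨⟨⟨fun y => mkS (crush C (F (cc y))), ?_⟩, ?_⟩, fun y => rfl⟩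
  · exact continuous_mkS (continuous_crush (hF.cont.comp continuous_cc) continuous_const)
      (fun y => crush_ne (hF.ne _ (cc_mem y)))
  · intro y hy
    exact key C hC _ (cc_mem y) (cc_bdy hy)

theorem Adm.exists_cls {F : (Fin n → ℝ) → ℝ × (Fin n → ℝ)} (hF : Adm F) : ∃ a, Cls F a := by
  obtain ⟨C0, h0, hb, h⟩ := hF.exists_loop
  obtain ⟨g0, hg0⟩ := h C0 le_rfl
  refine ⟨cl g0, C0, h0, fun C hC => ?_⟩
  obtain ⟨g, hg⟩ := h C hC
  refine ⟨g, hg, ?_⟩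
  symm
  refine cl_eq_of_homotopy (fun z => mkS (crush (C0 + (z.1 : ℝ) * (C - C0)) (F (cc z.2)))) ?_ ?_ ?_ ?_
  · refine continuous_mkS (continuous_crush ?_ ?_) (fun z => crush_ne (hF.ne _ (cc_mem z.2)))
    · exact hF.cont.comp (continuous_cc.comp continuous_snd)
    · fun_prop
  · intro y; simp [hg0]
  · intro y; simp [hg]
  · intro t y hy
    refine hb _ ?_ _ (cc_mem y) (cc_bdy hy)
    have := t.2.1
    nlinarith

theorem Cls.homotopy (G : ℝ → (Fin n → ℝ) → ℝ × (Fin n → ℝ))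
    (hG : Continuous fun z : ℝ × (Fin n → ℝ) => G z.1 z.2)
    (hne : ∀ t ∈ Set.Icc (0:ℝ) 1, ∀ x ∈ Q n, G t x ≠ 0)
    (hb : ∀ t ∈ Set.Icc (0:ℝ) 1, ∀ x ∈ Q n, x ∈ bdy n → (G t x).2 = 0 → 0 < (G t x).1)
    {a} (ha : Cls (G 0) a) : Cls (G 1) a := by
  obtain ⟨C0, h0, h⟩ := ha
  obtain ⟨C1, h1, h'⟩ := exists_crush
    ((isCompact_Icc (a := (0:ℝ)) (b := 1)).prod
      (isCompact_Q.inter_right (isClosed_bdy (n := n)))) hG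
    (fun t ht => hb t.1 ht.1 t.2 ht.2.1 ht.2.2)
  have hbd : ∀ C, C1 ≤ C → ∀ t ∈ Set.Icc (0:ℝ) 1, ∀ x ∈ Q n, x ∈ bdy n →
    mkS (crush C (G t x)) = e0 n := fun C hC t ht x hx hxb =>
      mkS_crush_eq (h1.trans hC) (h' C hC (t, x) ⟨ht, hx, hxb⟩)
  refine ⟨max C0 C1, h0.trans (le_max_left _ _), fun C hC => ?_⟩
  obtain ⟨g0, hg0, rfl⟩ := h C ((le_max_left _ _).trans hC)
  have hC1 := (le_max_right _ _).trans hC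
  let H : I × (I^(Fin n)) → S n := fun z => mkS (crush C (G z.1 (cc z.2)))
  have hH : Continuous H := by
    refine continuous_mkS (continuous_crush ?_ continuous_const)
      (fun z => crush_ne (hne _ z.1.2 _ (cc_mem z.2)))
    exact hG.comp ((continuous_subtype_val.comp continuous_fst).prodMk
      (continuous_cc.comp continuous_snd))
  refine ⟨⟨⟨fun y => H (1, y), by fun_prop⟩, ?_⟩, ?_, ?_⟩
  · intro y hy
    exact hbd C hC1 _ (1 : I).2 _ (cc_mem y) (cc_bdy hy)
  · intro y; rfl
  · symm
    refine cl_eq_of_homotopy H hH ?_ ?_ ?_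
    · intro y; rw [hg0]; rfl
    · intro y; rfl
    · intro t y hy
      exact hbd C hC1 _ t.2 _ (cc_mem y) (cc_bdy hy)

theorem Cls.loop (f : Ω^ (Fin n) (S n) (e0 n)) : Cls (fun x => unS (f (pj x))) (cl f) := by
  refine ⟨0, le_rfl, fun C hC => ?_⟩
  let H : I × (I^(Fin n)) → S n := fun z => mkS (crush ((z.1 : ℝ) * C) (unS (f z.2)))
  have hH : Continuous H := by
    refine continuous_mkS (continuous_crush ?_ ?_)
      (fun z => crush_ne (unS_ne _))
    · exact continuous_unS.comp ((map_continuous f).comp continuous_snd)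
    · fun_prop
  have hbd : ∀ t, ∀ y ∈ Cube.boundary (Fin n), H (t, y) = e0 n := by
    intro t y hy
    simp only [H]
    rw [GenLoop.boundary f y hy, unS_e0]
    exact mkS_crush_eq' one_pos rfl
  refine ⟨⟨⟨fun y => H (1, y), by fun_prop⟩, ?_⟩, ?_, ?_⟩
  · intro y hy
    exact hbd 1 y hy
  · intro y
    simp [H, pj_cc]
  · symm
    refine cl_eq_of_homotopy H hH ?_ ?_ hbd
    · intro y; simp [H, crush_zero, mkS_unS]
    · intro y; rfl

/-- Straight-line homotopies. -/
theorem Cls.line {F G : (Fin n → ℝ) → ℝ × (Fin n → ℝ)} (hF : Continuous F) (hG : Continuous G)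
    (h : ∀ x ∈ Q n, (∀ t ∈ Set.Icc (0:ℝ) 1, (1 - t) • (F x).2 + t • (G x).2 ≠ 0) ∨
      (0 < (F x).1 ∧ 0 < (G x).1) ∨ (x ∉ bdy n ∧ (F x).1 < 0 ∧ (G x).1 < 0))
    {a} (ha : Cls F a) : Cls G a := by
  have := Cls.homotopy (fun t x => (1 - t) • F x + t • G x) (by fun_prop) ?_ ?_ (a := a)
    (by simpa using ha)
  · simpa using this
  · intro t ht x hx h0
    have e1 := congrArg Prod.fst h0
    have e2 := congrArg Prod.snd h0
    simp only [Prod.fst_add, Prod.smul_fst, Prod.snd_add, Prod.smul_snd, smul_eq_mul] at e1 e2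
    rcases h x hx with h | h | h
    · exact h t ht e2
    · have := ht.1; have := ht.2
      rcases eq_or_lt_of_le ht.1 with h' | h'
      · simp [← h'] at e1; linarith
      · have : (F x, G x).1.1 * (1 - t) ≥ 0 := mul_nonneg h.1.le (by linarith)
        have := mul_pos h' h.2
        simp at e1
        nlinarith
    · have := ht.1; have := ht.2
      rcases eq_or_lt_of_le ht.1 with h' | h'
      · simp [← h'] at e1; linarith
      · have := mul_pos h' (neg_pos.mpr h.2.2)
        simp at e1
        nlinarith
  · intro t ht x hx hb h0
    simp only [Prod.snd_add, Prod.smul_snd] at h0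
    rcases h x hx with h | h | h
    · exact absurd h0 (h t ht)
    · simp only [Prod.fst_add, Prod.smul_fst, smul_eq_mul]
      rcases eq_or_lt_of_le ht.1 with h' | h'
      · simp [← h', h.1]
      · have := mul_pos h' h.2
        have : (1 - t) * (F x).1 ≥ 0 := mul_nonneg (by linarith [ht.2]) h.1.le
        linarith
    · exact absurd hb h.1

variable [Nonempty (Fin n)]

theorem Cls.triv {F : (Fin n → ℝ) → ℝ × (Fin n → ℝ)} (hF : Continuous F)
    (h : ∀ x ∈ Q n, (F x).2 = 0 → 0 < (F x).1) : Cls F 1 := by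
  obtain ⟨C0, h0, h⟩ := exists_crush isCompact_Q hF h
  refine ⟨C0, h0, fun C hC => ⟨const, fun y => ?_, rfl⟩⟩
  rw [mkS_crush_eq (h0.trans hC) (h C hC _ (cc_mem y))]
  rfl

/-- Splitting along a wall. -/
theorem Cls.split {F : (Fin n → ℝ) → ℝ × (Fin n → ℝ)} (hF : Adm F) (i : Fin n) {t : ℝ}
    (ht : t ∈ Set.Icc (0:ℝ) 1)
    {a b} (ha : Cls (fun x => F (Function.update x i (t * x i))) a)
    (hb : Cls (fun x => F (Function.update x i (1 - (1 - t) * (1 - x i)))) b) : Cls F (b * a) := by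
  obtain ⟨c, hc⟩ := hF.exists_cls
  suffices c = b * a by rwa [← this]
  obtain ⟨C0, h0, h⟩ := hc
  obtain ⟨C2, h2, h2'⟩ := ha
  obtain ⟨C3, h3, h3'⟩ := hb
  let C := max C0 (max C2 C3)
  obtain ⟨g, hg, rfl⟩ := h C (le_max_left _ _)
  obtain ⟨gl, hgl, rfl⟩ := h2' C ((le_max_left _ _).trans (le_max_right _ _))
  obtain ⟨gr, hgr, rfl⟩ := h3' C ((le_max_right _ _).trans (le_max_right _ _))
  refine cl_split i ⟨t, ht⟩ g gl gr ?_ ?_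
  · intro y
    rw [hg, hgl]
    change mkS (crush C (F _)) = mkS (crush C (F _))
    congr 3
    funext k
    by_cases hk : k = i
    · subst hk; simp [cc]
    · simp [cc, hk]
  · intro y
    rw [hg, hgr]
    change mkS (crush C (F _)) = mkS (crush C (F _))
    congr 3
    funext k
    by_cases hk : k = i
    · subst hk; simp [cc]
    · simp [cc, hk]

end Steenrod

namespace Steenrod
open scoped unitInterval Topology Topology.Homotopy
open GenLoop

/-! ### Reflections -/

section refl
variable {m : Type*} [Fintype m] [DecidableEq m]

/-- The reflection in the hyperplane orthogonal to `u`. -/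
noncomputable def refl (u : m → ℝ) : Matrix m m ℝ :=
  1 - (2 / (u ⬝ᵥ u)) • Matrix.vecMulVec u u

theorem refl_transpose (u : m → ℝ) : (refl u)ᵀ = refl u := by
  ext i j
  simp [refl, Matrix.vecMulVec_apply, mul_comm, Matrix.one_apply, eq_comm]

theorem refl_mulVec (u v : m → ℝ) : refl u *ᵥ v = v - (2 * (u ⬝ᵥ v) / (u ⬝ᵥ u)) • u := by
  rw [refl, Matrix.sub_mulVec, Matrix.one_mulVec, Matrix.smul_mulVec, Matrix.vecMulVec_mulVec]
  ext i
  simp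
  ring

theorem refl_mul_self {u : m → ℝ} (hu : u ⬝ᵥ u ≠ 0) : refl u * refl u = 1 := by
  apply Matrix.ext_of_mulVec_single
  intro i
  generalize (Pi.single i 1 : m → ℝ) = v
  rw [← Matrix.mulVec_mulVec, refl_mulVec, refl_mulVec, Matrix.one_mulVec, dotProduct_sub,
    dotProduct_smul, smul_eq_mul]
  ext i
  simp
  field_simp
  ring

theorem det_refl {u : m → ℝ} (hu : u ⬝ᵥ u ≠ 0) : (refl u).det = -1 := by
  have : refl u = 1 + Matrix.replicateCol Unit ((-(2 / (u ⬝ᵥ u))) • u) *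
      Matrix.replicateRow Unit u := by
    ext i j
    simp [refl, Matrix.vecMulVec_apply, Matrix.mul_apply]
    ring
  rw [this, Matrix.det_one_add_replicateCol_mul_replicateRow, dotProduct_smul, smul_eq_mul]
  field_simp
  norm_num

theorem continuous_refl {T : Type*} [TopologicalSpace T] {u : T → m → ℝ} (hu : Continuous u)
    (h : ∀ t, u t ⬝ᵥ u t ≠ 0) : Continuous fun t => refl (u t) := by
  unfold refl
  have h1 : Continuous fun t => u t ⬝ᵥ u t := hu.dotProduct hu
  refine continuous_const.sub (Continuous.smul (continuous_const.div h1 h) ?_)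
  exact hu.matrix_vecMulVec hu

theorem dot_self_ne {u : m → ℝ} (hu : u ≠ 0) : u ⬝ᵥ u ≠ 0 := by
  rwa [Ne, dotProduct_self_eq_zero]

end refl

/-! ### Paths of invertible matrices -/

section invmat
variable {m : Type*} [Fintype m] [DecidableEq m]

/-- The set of invertible matrices. -/
def GLset (m : Type*) [Fintype m] [DecidableEq m] : Set (Matrix m m ℝ) := {M | M.det ≠ 0}

theorem joined_of_path (p : ℝ → Matrix m m ℝ) (hp : Continuous p)
    (h : ∀ t ∈ Set.Icc (0:ℝ) 1, (p t).det ≠ 0) : JoinedIn (GLset m) (p 0) (p 1) := by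
  refine ⟨⟨⟨fun t : I => p t, by fun_prop⟩, by simp, by simp⟩, fun t => h t t.2⟩

theorem joined_mul {A B C D : Matrix m m ℝ} (h1 : JoinedIn (GLset m) A B)
    (h2 : JoinedIn (GLset m) C D) : JoinedIn (GLset m) (A * C) (B * D) := by
  refine ⟨h1.somePath.mul h2.somePath, fun t => ?_⟩
  have e1 : (h1.somePath t).det ≠ 0 := h1.somePath_mem t
  have e2 : (h2.somePath t).det ≠ 0 := h2.somePath_mem t
  simp only [GLset, Path.mul_apply]
  change (_ * _ : Matrix m m ℝ).det ≠ 0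
  rw [Matrix.det_mul]
  exact mul_ne_zero e1 e2

/-- The coordinate reflection. -/
def Dm (i : m) : Matrix m m ℝ := Matrix.diagonal (Function.update 1 i (-1))

theorem det_update (i : m) (c : ℝ) : (Matrix.diagonal (Function.update (1 : m → ℝ) i c)).det = c := by
  rw [Matrix.det_diagonal, Finset.prod_update_of_mem (Finset.mem_univ i)]
  simp

theorem Dm_eq_refl (i : m) : Dm i = refl (Pi.single i 1) := by
  ext a b
  by_cases hab : a = b
  · subst hab
    by_cases ha : a = i
    · subst ha; simp [Dm, refl, Matrix.vecMulVec_apply]; norm_num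
    · simp [Dm, refl, Matrix.vecMulVec_apply, ha]
  · by_cases ha : a = i
    · subst ha; simp [Dm, refl, Matrix.vecMulVec_apply, hab, Ne.symm hab]
    · simp [Dm, refl, Matrix.vecMulVec_apply, ha, hab]

theorem joined_Dm (i k : m) : JoinedIn (GLset m) (Dm k) (Dm i) := by
  by_cases hik : i = k
  · subst hik
    exact JoinedIn.refl (by change (Dm i).det ≠ 0; rw [Dm, det_update]; norm_num)
  have hne : ∀ t : ℝ, ((1 - t) • (Pi.single k 1 : m → ℝ) + t • Pi.single i 1) ≠ 0 := by
    intro t h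
    have h1 := congrFun h k
    have h2 := congrFun h i
    simp [hik, Ne.symm hik] at h1 h2
    rw [h2] at h1; simp at h1
  have := joined_of_path (fun t => refl ((1 - t) • (Pi.single k 1 : m → ℝ) + t • Pi.single i 1))
    (continuous_refl (by fun_prop) fun t => dot_self_ne (hne t))
    (fun t _ => by rw [det_refl (dot_self_ne (hne t))]; norm_num)
  rw [Dm_eq_refl, Dm_eq_refl]
  simpa using this

/-- The sign alternative for invertible matrices. -/
def PS (i : m) (M : Matrix m m ℝ) : Prop :=
  (0 < M.det ∧ JoinedIn (GLset m) M 1) ∨ (M.det < 0 ∧ JoinedIn (GLset m) M (Dm i))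

theorem Dm_mul_self (i : m) : Dm i * Dm i = 1 := by
  rw [Dm_eq_refl, refl_mul_self]; simp

theorem PS.mul {i : m} {A B : Matrix m m ℝ} (hA : PS i A) (hB : PS i B) : PS i (A * B) := by
  unfold PS
  rw [Matrix.det_mul]
  rcases hA with ⟨a, ha⟩ | ⟨a, ha⟩ <;> rcases hB with ⟨b, hb⟩ | ⟨b, hb⟩
  · left; exact ⟨mul_pos a b, by simpa using joined_mul ha hb⟩
  · right; exact ⟨mul_neg_of_pos_of_neg a b, by simpa using joined_mul ha hb⟩
  · right; exact ⟨mul_neg_of_neg_of_pos a b, by simpa using joined_mul ha hb⟩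
  · left; exact ⟨mul_pos_of_neg_of_neg a b, by simpa [Dm_mul_self] using joined_mul ha hb⟩

theorem PS_single (i k : m) {c : ℝ} (hc : c ≠ 0) :
    PS i (Matrix.diagonal (Function.update (1 : m → ℝ) k c)) := by
  unfold PS
  rw [det_update]
  have hcont : ∀ d : ℝ, Continuous fun t : ℝ =>
      (Matrix.diagonal (Function.update (1 : m → ℝ) k ((1 - t) * c + t * d))) := fun d => by
    refine Continuous.matrix_diagonal ?_
    exact Continuous.update continuous_const k (by fun_prop)
  rcases lt_or_gt_of_ne hc with h | h
  · right
    refine ⟨h, JoinedIn.trans ?_ (joined_Dm i k)⟩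
    have := joined_of_path _ (hcont (-1)) (fun t ht => by
      rw [det_update]
      have := ht.1; have := ht.2
      have : (1 - t) * c + t * (-1) < 0 := by
        rcases eq_or_lt_of_le ht.1 with h' | h'
        · simp [← h', h]
        · nlinarith [mul_nonneg (sub_nonneg.mpr ht.2) (neg_pos.mpr h).le]
      exact this.ne)
    simpa [Dm] using this
  · left
    refine ⟨h, ?_⟩
    have := joined_of_path _ (hcont 1) (fun t ht => by
      rw [det_update]
      have : 0 < (1 - t) * c + t * 1 := by
        rcases eq_or_lt_of_le ht.1 with h' | h'
        · simp [← h', h]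
        · nlinarith [mul_nonneg (sub_nonneg.mpr ht.2) h.le]
      exact this.ne')
    simpa using this

theorem PS_one (i : m) : PS i (1 : Matrix m m ℝ) :=
  Or.inl ⟨by simp, JoinedIn.refl (by simp [GLset])⟩

theorem PS_all (i : m) (M : Matrix m m ℝ) (hM : M.det ≠ 0) : PS i M := by
  refine Matrix.diagonal_transvection_induction_of_det_ne_zero (PS i) M hM ?_ ?_ ?_
  · intro d hd
    rw [Matrix.det_diagonal, Finset.prod_ne_zero_iff] at hd
    have : ∀ s : Finset m, PS i (Matrix.diagonal fun k => if k ∈ s then d k else 1) := by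
      intro s
      induction s using Finset.induction_on with
      | empty => simpa using PS_one i
      | insert a s ha ih =>
        have : (Matrix.diagonal fun k => if k ∈ insert a s then d k else 1) =
            Matrix.diagonal (Function.update (1 : m → ℝ) a (d a)) *
              (Matrix.diagonal fun k => if k ∈ s then d k else 1) := by
          rw [Matrix.diagonal_mul_diagonal]
          congr 1
          funext k
          by_cases hk : k = a
          · subst hk; simp [ha]
          · simp [hk]
        rw [this]
        exact (PS_single i a (hd a (Finset.mem_univ a))).mul ih
    simpa using this Finset.univ
  · intro t
    left
    refine ⟨by simp, ?_⟩
    have := joined_of_path (fun s => Matrix.transvection t.i t.j ((1 - s) * t.c))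
      (by
        unfold Matrix.transvection
        refine continuous_const.add ?_
        refine continuous_matrix fun a b => ?_
        simp only [Matrix.single_apply]
        split_ifs <;> fun_prop)
      (fun s _ => by rw [Matrix.det_transvection_of_ne _ _ t.hij]; simp)
    simpa [Matrix.TransvectionStruct.toMatrix] using this
  · intro A B _ _ hA hB
    exact hA.mul hB

end invmat

/-! ### Classes of affine maps -/

variable {n : ℕ}

/-- The affine model map. -/
def Lin (A : Matrix (Fin n) (Fin n) ℝ) (x0 x : Fin n → ℝ) : ℝ × (Fin n → ℝ) :=
  (-1, A *ᵥ (x - x0))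

/-- The interior of the cube. -/
def Qi (n : ℕ) : Set (Fin n → ℝ) := {x | ∀ i, x i ∈ Set.Ioo (0:ℝ) 1}

theorem Qi_not_bdy {x : Fin n → ℝ} (hx : x ∈ Qi n) : x ∉ bdy n := by
  rintro ⟨i, hi⟩
  have := hx i
  rcases hi with hi | hi <;> rw [hi] at this <;> simp at this

theorem Q_not_bdy {x : Fin n → ℝ} (hx : x ∈ Q n) (hb : x ∉ bdy n) : x ∈ Qi n := by
  intro i
  refine ⟨lt_of_le_of_ne (hx i).1 fun h => hb ⟨i, Or.inl h.symm⟩,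
    lt_of_le_of_ne (hx i).2 fun h => hb ⟨i, Or.inr h⟩⟩

theorem Qi_sub_Q {x : Fin n → ℝ} (hx : x ∈ Qi n) : x ∈ Q n := fun i => ⟨(hx i).1.le, (hx i).2.le⟩

theorem mulVec_eq_zero_of_det {A : Matrix (Fin n) (Fin n) ℝ} (hA : A.det ≠ 0) {v : Fin n → ℝ}
    (h : A *ᵥ v = 0) : v = 0 := Matrix.eq_zero_of_mulVec_eq_zero hA h

theorem adm_Lin {A : Matrix (Fin n) (Fin n) ℝ} (hA : A.det ≠ 0) {x0} (hx0 : x0 ∈ Qi n) :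
    Adm (Lin A x0) where
  cont := by unfold Lin; fun_prop
  ne x _ h := by
    have := congrArg Prod.fst h
    simp [Lin] at this
  bd x _ hb h := by
    have := mulVec_eq_zero_of_det hA h
    rw [sub_eq_zero] at this
    subst this
    exact absurd hb (Qi_not_bdy hx0)

theorem Lin_path (p : ℝ → Matrix (Fin n) (Fin n) ℝ) (hp : Continuous p)
    (h : ∀ t ∈ Set.Icc (0:ℝ) 1, (p t).det ≠ 0) {x0 x1} (hx0 : x0 ∈ Qi n) (hx1 : x1 ∈ Qi n)
    {a} (ha : Cls (Lin (p 0) x0) a) : Cls (Lin (p 1) x1) a := by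
  have hx : ∀ t ∈ Set.Icc (0:ℝ) 1, (1 - t) • x0 + t • x1 ∈ Qi n := by
    intro t ht i
    exact (convex_Ioo (0:ℝ) 1) (hx0 i) (hx1 i) (sub_nonneg.mpr ht.2) ht.1 (by ring)
  have := Cls.homotopy (fun t => Lin (p t) ((1 - t) • x0 + t • x1)) ?_
    (fun t ht => (adm_Lin (h t ht) (hx t ht)).ne)
    (fun t ht => (adm_Lin (h t ht) (hx t ht)).bd) (a := a) (by simpa using ha)
  · simpa using this
  · unfold Lin
    refine continuous_const.prodMk ?_
    exact (hp.comp continuous_fst).matrix_mulVec (by fun_prop)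

theorem Lin_joined {A B : Matrix (Fin n) (Fin n) ℝ} (h : JoinedIn (GLset (Fin n)) A B)
    {x0 x1} (hx0 : x0 ∈ Qi n) (hx1 : x1 ∈ Qi n) {a} (ha : Cls (Lin A x0) a) :
    Cls (Lin B x1) a := by
  have := Lin_path h.somePath.extend h.somePath.continuous_extend (fun t ht => ?_) hx0 hx1
    (by simpa using ha)
  · simpa using this
  · rw [Path.extend_apply _ ht]
    exact h.somePath_mem _

variable [Nonempty (Fin n)]

theorem Cls.symm (i : Fin n) {F : (Fin n → ℝ) → ℝ × (Fin n → ℝ)} {a} (h : Cls F a) :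
    Cls (fun x => F (Function.update x i (1 - x i))) a⁻¹ := by
  obtain ⟨C0, h0, h⟩ := h
  refine ⟨C0, h0, fun C hC => ?_⟩
  obtain ⟨g, hg, rfl⟩ := h C hC
  refine ⟨symmAt i g, fun y => ?_, (cl_inv i g).symm⟩
  rw [symmAt_apply, hg]
  change mkS (crush C (F _)) = mkS (crush C (F _))
  congr 3
  funext k
  by_cases hk : k = i
  · subst hk; simp [cc]
  · simp [cc, hk]

/-- The sign rule for the classes of affine maps. -/
theorem Lin_cls (n : ℕ) [Nonempty (Fin n)] : ∃ ι : HomotopyGroup (Fin n) (S n) (e0 n),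
    ∀ A : Matrix (Fin n) (Fin n) ℝ, ∀ x0 ∈ Qi n,
      (0 < A.det → Cls (Lin A x0) ι) ∧ (A.det < 0 → Cls (Lin A x0) ι⁻¹) := by
  let i : Fin n := Classical.arbitrary _
  let c : Fin n → ℝ := fun _ => 1/2
  have hc : c ∈ Qi n := fun i => by norm_num [c]
  obtain ⟨ι, hι⟩ := (adm_Lin (A := 1) (by simp) hc).exists_cls
  refine ⟨ι, fun A x0 hx0 => ⟨fun hA => ?_, fun hA => ?_⟩⟩
  · rcases PS_all i A hA.ne' with h | h
    · exact Lin_joined h.2.symm hc hx0 hι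
    · exact absurd h.1 (not_lt.mpr hA.le)
  · rcases PS_all i A hA.ne with h | h
    · exact absurd h.1 (not_lt.mpr hA.le)
    · refine Lin_joined h.2.symm hc hx0 ?_
      have := hι.symm i
      convert this using 1
      funext x
      unfold Lin
      congr 1
      funext k
      simp only [Dm, Matrix.mulVec_diagonal, Matrix.one_mulVec]
      by_cases hk : k = i
      · rw [hk]; simp [c]; ring
      · simp [hk]

end Steenrod

namespace Steenrod
open scoped unitInterval Topology Topology.Homotopy
open GenLoop

variable {n : ℕ}

/-! ### Maps with a single nondegenerate zero -/

/-- Raise the first coordinate by a multiple of the norm of the others. -/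
noncomputable def cone (C : ℝ) (F : (Fin n → ℝ) → ℝ × (Fin n → ℝ)) (x : Fin n → ℝ) :
    ℝ × (Fin n → ℝ) := ((F x).1 + C * ‖(F x).2‖, (F x).2)

theorem continuous_cone {C : ℝ} {F : (Fin n → ℝ) → ℝ × (Fin n → ℝ)} (hF : Continuous F) :
    Continuous (cone C F) := by
  unfold cone; fun_prop

theorem Adm.trichotomy {F : (Fin n → ℝ) → ℝ × (Fin n → ℝ)} (hF : Adm F) {x} (hx : x ∈ Q n) :
    (F x).2 ≠ 0 ∨ ((F x).2 = 0 ∧ 0 < (F x).1) ∨ ((F x).2 = 0 ∧ x ∉ bdy n ∧ (F x).1 < 0) := by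
  by_cases h : (F x).2 = 0
  · right
    rcases lt_trichotomy (F x).1 0 with h1 | h1 | h1
    · right
      exact ⟨h, fun hb => absurd (hF.bd x hx hb h) (not_lt.mpr h1.le), h1⟩
    · exact absurd (Prod.ext h1 h) (hF.ne x hx)
    · exact Or.inl ⟨h, h1⟩
  · exact Or.inl h

theorem Cls.cone_iff (C : ℝ) {F : (Fin n → ℝ) → ℝ × (Fin n → ℝ)} (hF : Adm F) {a} :
    Cls (cone C F) a ↔ Cls F a := by
  constructor
  · refine Cls.line (continuous_cone hF.cont) hF.cont fun x hx => ?_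
    rcases hF.trichotomy hx with h | h | h
    · left
      intro t _
      simpa [cone, ← add_smul] using h
    · right; left
      simp [cone, h.1, h.2]
    · right; right
      simp [cone, h.1, h.2]
  · refine Cls.line hF.cont (continuous_cone hF.cont) fun x hx => ?_
    rcases hF.trichotomy hx with h | h | h
    · left
      intro t _
      simpa [cone, ← add_smul] using h
    · right; left
      simp [cone, h.1, h.2]
    · right; right
      simp [cone, h.1, h.2]

theorem single_zero {F : (Fin n → ℝ) → ℝ × (Fin n → ℝ)} (hF : Adm F) {x0 : Fin n → ℝ}
    (hx0 : x0 ∈ Qi n) (hz : ∀ x ∈ Q n, (F x).2 = 0 → 0 < (F x).1 ∨ x = x0)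
    (h0 : (F x0).2 = 0) (hneg : (F x0).1 < 0) {D : (Fin n → ℝ) →L[ℝ] (Fin n → ℝ)}
    (hD : HasFDerivAt (fun x => (F x).2) D x0) {A : Matrix (Fin n) (Fin n) ℝ}
    (hA : ∀ v, D v = A *ᵥ v) (hdet : A.det ≠ 0) {a} (ha : Cls (Lin A x0) a) : Cls F a := by
  have hker : LinearMap.ker (D : (Fin n → ℝ) →ₗ[ℝ] (Fin n → ℝ)) = ⊥ := by
    rw [LinearMap.ker_eq_bot']
    intro v hv
    exact mulVec_eq_zero_of_det hdet (by rw [← hA]; exact hv)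
  obtain ⟨K, hK, hanti⟩ := LinearMap.exists_antilipschitzWith _ hker
  have hK' : (0:ℝ) < K := hK
  have hanti' : ∀ v, ‖v‖ ≤ K * ‖D v‖ := fun v => by
    have := hanti.le_mul_dist v 0
    simpa using this
  have hlo := hD.isLittleO.def (c := (2 * (K:ℝ))⁻¹) (by positivity)
  rw [Metric.eventually_nhds_iff_ball] at hlo
  obtain ⟨r, hr, hball⟩ := hlo
  have hAL := adm_Lin hdet hx0
  have hcomp : IsCompact (Q n \ Metric.ball x0 r) := isCompact_Q.diff Metric.isOpen_ball
  have hout : ∀ x ∈ Q n \ Metric.ball x0 r, x ≠ x0 := by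
    rintro x hx rfl
    exact hx.2 (Metric.mem_ball_self hr)
  obtain ⟨C1, hC1, h1⟩ := exists_crush hcomp hF.cont (fun x hx h =>
    (hz x hx.1 h).resolve_right (hout x hx))
  obtain ⟨C2, hC2, h2⟩ := exists_crush hcomp hAL.cont (fun x hx h => by
    exfalso
    have := mulVec_eq_zero_of_det hdet h
    exact hout x hx (sub_eq_zero.mp this))
  let C := max C1 C2
  have hC : 0 ≤ C := hC1.trans (le_max_left _ _)
  have pos : ∀ a : ℝ, 1 ≤ C * a → 0 < a := fun a h => by
    by_contra hn
    push Not at hn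
    nlinarith [mul_nonneg hC (neg_nonneg.mpr hn)]
  rw [← Cls.cone_iff C hF]
  rw [← Cls.cone_iff C hAL] at ha
  refine Cls.line (continuous_cone hAL.cont) (continuous_cone hF.cont) (fun x hx => ?_) ha
  by_cases hxb : x ∈ Metric.ball x0 r
  · by_cases hxx : x = x0
    · right; right
      subst hxx
      refine ⟨Qi_not_bdy hx0, ?_, ?_⟩
      · simp [cone, Lin]
      · simpa [cone, h0] using hneg
    · left
      intro t ht hzero
      have hb := hball x hxb
      have e1 : (cone C (Lin A x0) x).2 = D (x - x0) := by simp [cone, Lin, hA]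
      have e2 : (cone C F x).2 = (F x).2 := rfl
      rw [e1, e2] at hzero
      rw [h0, sub_zero] at hb
      have e3 : D (x - x0) = - (t • ((F x).2 - D (x - x0))) := by
        rw [eq_neg_iff_add_eq_zero, ← hzero]; module
      have e4 : ‖D (x - x0)‖ ≤ (2 * (K:ℝ))⁻¹ * ‖x - x0‖ := by
        rw [e3, norm_neg, norm_smul]
        refine le_trans ?_ hb
        rw [Real.norm_of_nonneg ht.1]
        exact mul_le_of_le_one_left (norm_nonneg _) ht.2
      have e5 := hanti' (x - x0)
      have e6 : 0 < ‖x - x0‖ := norm_pos_iff.mpr (sub_ne_zero.mpr hxx)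
      have e7 : K * ‖D (x - x0)‖ ≤ K * ((2 * (K:ℝ))⁻¹ * ‖x - x0‖) := by gcongr
      have e8 : K * ((2 * (K:ℝ))⁻¹ * ‖x - x0‖) = ‖x - x0‖ / 2 := by field_simp
      linarith
  · right; left
    exact ⟨pos _ (h2 C (le_max_right _ _) x ⟨hx, hxb⟩), pos _ (h1 C (le_max_left _ _) x ⟨hx, hxb⟩)⟩


/-! ### Maps with finitely many nondegenerate zeros -/

/-- The set of points sent to the open negative half-axis. -/
def Zs (F : (Fin n → ℝ) → ℝ × (Fin n → ℝ)) : Set (Fin n → ℝ) :=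
  {x | x ∈ Q n ∧ (F x).2 = 0 ∧ (F x).1 < 0}

/-- Admissible maps with finitely many zeros, all nondegenerate. -/
structure Nice (F : (Fin n → ℝ) → ℝ × (Fin n → ℝ)) : Prop where
  adm : Adm F
  fin : (Zs F).Finite
  nd : ∀ x ∈ Zs F, ∃ D : (Fin n → ℝ) →L[ℝ] (Fin n → ℝ),
    HasFDerivAt (fun x => (F x).2) D x ∧ Function.Injective D

/-- Affine stretching in one coordinate. -/
noncomputable def strB (i : Fin n) (β : ℝ) : (Fin n → ℝ) →L[ℝ] (Fin n → ℝ) :=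
  ContinuousLinearMap.pi fun k => (if k = i then β else 1) • ContinuousLinearMap.proj k

theorem strB_apply (i : Fin n) (β : ℝ) (x : Fin n → ℝ) (k : Fin n) :
    strB i β x k = (if k = i then β else 1) * x k := by
  by_cases hk : k = i <;> simp [strB, hk]

theorem strB_inj (i : Fin n) {β : ℝ} (hβ : 0 < β) : Function.Injective (strB i β) := by
  rw [injective_iff_map_eq_zero]
  intro x hx
  funext k
  have := congrFun hx k
  rw [strB_apply] at this
  by_cases hk : k = i
  · simpa [hk, hβ.ne'] using this
  · simpa [hk] using this

theorem update_eq_str (i : Fin n) (α β : ℝ) (x : Fin n → ℝ) :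
    Function.update x i (α + β * x i) = Pi.single i α + strB i β x := by
  funext k
  rw [Pi.add_apply, strB_apply]
  by_cases hk : k = i
  · subst hk; simp
  · simp [hk]

theorem Nice.stretch {F : (Fin n → ℝ) → ℝ × (Fin n → ℝ)} (hF : Nice F) (i : Fin n) {α β : ℝ}
    (hα : 0 ≤ α) (hβ : 0 < β) (hαβ : α + β ≤ 1)
    (h0 : α = 0 ∨ ∀ x ∈ Zs F, x i ≠ α) (h1 : α + β = 1 ∨ ∀ x ∈ Zs F, x i ≠ α + β)
    {y : Fin n → ℝ} (hy : y ∈ Zs F) (hyi : y i < α ∨ α + β < y i) :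
    Nice (fun x => F (Function.update x i (α + β * x i))) ∧
    (Zs (fun x => F (Function.update x i (α + β * x i)))).ncard < (Zs F).ncard := by
  set M : (Fin n → ℝ) → (Fin n → ℝ) := fun x => Function.update x i (α + β * x i) with hM
  have hMi : ∀ x, M x i = α + β * x i := fun x => by simp [hM]
  have hMk : ∀ x k, k ≠ i → M x k = x k := fun x k hk => by simp [hM, hk]
  have hMeq : M = fun x => Pi.single i α + strB i β x := funext fun x => update_eq_str i α β x
  have hMinj : Function.Injective M := by
    rw [hMeq]
    intro x y hxy
    exact strB_inj i hβ (add_left_cancel hxy)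
  have hMQ : ∀ x ∈ Q n, M x ∈ Q n := by
    intro x hx k
    by_cases hk : k = i
    · subst hk
      rw [hMi]
      have := hx k
      constructor
      · have := mul_nonneg hβ.le this.1; linarith
      · have := mul_le_of_le_one_right hβ.le this.2; linarith
    · rw [hMk x k hk]; exact hx k
  have hMder : ∀ x, HasFDerivAt M (strB i β) x := by
    intro x
    rw [hMeq]
    exact (strB i β).hasFDerivAt.const_add _
  have hMc : Continuous M := by rw [hMeq]; fun_prop
  change Nice (fun x => F (M x)) ∧ (Zs (fun x => F (M x))).ncard < (Zs F).ncard
  have hZ : ∀ x, x ∈ Zs (fun x => F (M x)) → M x ∈ Zs F := fun x hx => ⟨hMQ x hx.1, hx.2⟩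
  have himg : M '' (Zs (fun x => F (M x))) ⊆ Zs F \ {y} := by
    rintro _ ⟨x, hx, rfl⟩
    refine ⟨hZ x hx, ?_⟩
    rintro h
    have h : M x = y := h
    have hxi := hx.1 i
    rw [← h, hMi] at hyi
    rcases hyi with hyi | hyi
    · have := mul_nonneg hβ.le hxi.1; linarith
    · have := mul_le_of_le_one_right hβ.le hxi.2; linarith
  refine ⟨⟨⟨hF.adm.cont.comp hMc, fun x hx => hF.adm.ne _ (hMQ x hx), ?_⟩, ?_, ?_⟩, ?_⟩
  · rintro x hx ⟨k, hk⟩ hz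
    have key : M x ∈ bdy n ∨ M x ∉ Zs F := by
      by_cases hki : k = i
      · subst hki
        rcases hk with hk | hk
        · rcases h0 with h0 | h0
          · left
            exact ⟨k, Or.inl (by rw [hMi, hk, h0]; simp)⟩
          · right
            intro h
            exact h0 _ h (by rw [hMi, hk]; simp)
        · rcases h1 with h1 | h1
          · left
            exact ⟨k, Or.inr (by rw [hMi, hk, mul_one, h1])⟩
          · right
            intro h
            exact h1 _ h (by rw [hMi, hk]; simp)
      · left
        exact ⟨k, by rw [hMk x k hki]; exact hk⟩
    rcases hF.adm.trichotomy (hMQ x hx) with h | h | h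
    · exact absurd hz h
    · exact h.2
    · rcases key with hb | hb
      · exact hF.adm.bd _ (hMQ x hx) hb hz
      · exact absurd ⟨hMQ x hx, h.1, h.2.2⟩ hb
  · exact ((hF.fin.subset (himg.trans Set.sdiff_subset))).of_finite_image hMinj.injOn
  · intro x hx
    obtain ⟨D, hD, hinj⟩ := hF.nd _ (hZ x hx)
    exact ⟨D.comp (strB i β), hD.comp x (hMder x), hinj.comp (strB_inj i hβ)⟩
  · rw [← Set.ncard_image_of_injective _ hMinj]
    calc _ ≤ (Zs F \ {y}).ncard := Set.ncard_le_ncard himg (hF.fin.subset Set.sdiff_subset)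
      _ < _ := Set.ncard_sdiff_singleton_lt_of_mem hy hF.fin

variable [Nonempty (Fin n)]

theorem Nice.cls {ι : HomotopyGroup (Fin n) (S n) (e0 n)}
    (hι : ∀ A : Matrix (Fin n) (Fin n) ℝ, ∀ x0 ∈ Qi n,
      (0 < A.det → Cls (Lin A x0) ι) ∧ (A.det < 0 → Cls (Lin A x0) ι⁻¹)) (k : ℕ) :
    ∀ F : (Fin n → ℝ) → ℝ × (Fin n → ℝ), Nice F → (Zs F).ncard ≤ k →
      ∃ a ∈ Subgroup.zpowers ι, Cls F a := by
  induction k with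
  | zero =>
    intro F hF hk
    have hk : Zs F = ∅ := (Set.ncard_eq_zero hF.fin).mp (by omega)
    refine ⟨1, one_mem _, Cls.triv hF.adm.cont fun x hx hz => ?_⟩
    rcases hF.adm.trichotomy hx with h | h | h
    · exact absurd hz h
    · exact h.2
    · have : x ∈ Zs F := ⟨hx, h.1, h.2.2⟩
      rw [hk] at this
      exact absurd this (Set.notMem_empty x)
  | succ k ih =>
    intro F hF hk
    by_cases hlt : (Zs F).ncard ≤ k
    · exact ih F hF hlt
    by_cases hone : ∃ x0, Zs F = {x0}
    · obtain ⟨x0, hx0⟩ := hone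
      have hm : x0 ∈ Zs F := by rw [hx0]; rfl
      obtain ⟨D, hD, hinj⟩ := hF.nd x0 hm
      have hQi : x0 ∈ Qi n := by
        refine Q_not_bdy hm.1 fun hb => ?_
        have := hF.adm.bd x0 hm.1 hb hm.2.1
        have := hm.2.2
        linarith
      let A := LinearMap.toMatrix' (D : (Fin n → ℝ) →ₗ[ℝ] (Fin n → ℝ))
      have hA : ∀ v, D v = A *ᵥ v := fun v => by
        rw [← Matrix.toLin'_apply, Matrix.toLin'_toMatrix']; rfl
      have hdet : A.det ≠ 0 := by
        intro h
        obtain ⟨v, hv, hv0⟩ := Matrix.exists_mulVec_eq_zero_iff.mpr h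
        rw [← hA] at hv0
        exact hv (hinj (by rw [hv0, map_zero]))
      have hz : ∀ x ∈ Q n, (F x).2 = 0 → 0 < (F x).1 ∨ x = x0 := by
        intro x hx hz
        rcases hF.adm.trichotomy hx with h | h | h
        · exact absurd hz h
        · exact Or.inl h.2
        · right
          have : x ∈ Zs F := ⟨hx, h.1, h.2.2⟩
          rw [hx0] at this
          exact this
      have hs := fun {a} (ha : Cls (Lin A x0) a) =>
        single_zero hF.adm hQi hz hm.2.1 hm.2.2 hD hA hdet ha
      rcases lt_or_gt_of_ne hdet with h | h
      · exact ⟨ι⁻¹, inv_mem (Subgroup.mem_zpowers _), hs ((hι A x0 hQi).2 h)⟩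
      · exact ⟨ι, Subgroup.mem_zpowers _, hs ((hι A x0 hQi).1 h)⟩
    · have hne : (Zs F).Nonempty := by
        rw [← Set.ncard_pos hF.fin]; omega
      obtain ⟨x, hx⟩ := hne
      have : ∃ y ∈ Zs F, y ≠ x := by
        by_contra hcon
        push Not at hcon
        exact hone ⟨x, Set.eq_singleton_iff_unique_mem.mpr ⟨hx, hcon⟩⟩
      obtain ⟨y, hy, hyx⟩ := this
      obtain ⟨i, hi⟩ := Function.ne_iff.mp hyx
      have : ∃ x ∈ Zs F, ∃ y ∈ Zs F, x i < y i := by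
        rcases lt_or_gt_of_ne hi with h | h
        · exact ⟨y, hy, x, hx, h⟩
        · exact ⟨x, hx, y, hy, h⟩
      obtain ⟨x, hx, y, hy, hxy⟩ := this
      obtain ⟨t, ht, htn⟩ := (Set.Ioo_infinite hxy).exists_notMem_finset
        (hF.fin.image (fun z => z i)).toFinset
      have htn : ∀ z ∈ Zs F, z i ≠ t := by
        intro z hz h
        apply htn
        simp only [Set.Finite.mem_toFinset]
        exact ⟨z, hz, h⟩
      have ht0 : 0 < t := lt_of_le_of_lt (hx.1 i).1 ht.1
      have ht1 : t < 1 := lt_of_lt_of_le ht.2 (hy.1 i).2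
      obtain ⟨n1, c1⟩ := hF.stretch i (α := 0) (β := t) le_rfl ht0 (by linarith) (Or.inl rfl)
        (Or.inr (by simpa using htn)) hy (Or.inr (by simpa using ht.2))
      obtain ⟨n2, c2⟩ := hF.stretch i (α := t) (β := 1 - t) ht0.le (by linarith) (by linarith)
        (Or.inr htn) (Or.inl (by ring)) hx (Or.inl ht.1)
      obtain ⟨a, ha, hca⟩ := ih _ n1 (by omega)
      obtain ⟨b, hb, hcb⟩ := ih _ n2 (by omega)
      refine ⟨b * a, mul_mem hb ha, Cls.split hF.adm i ⟨ht0.le, ht1.le⟩ ?_ ?_⟩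
      · convert hca using 4
        ring
      · convert hcb using 4
        ring

end Steenrod

namespace Steenrod
open scoped unitInterval Topology Topology.Homotopy
open GenLoop

variable {n : ℕ}

/-! ### Cyclicity of the top homotopy group of the sphere -/

theorem exists_regular {G : (Fin n → ℝ) → ℝ × (Fin n → ℝ)} (hG : Differentiable ℝ G) :
    ∃ v : Fin n → ℝ, ∀ x, (G x).1 < 0 → (G x).2 + (G x).1 • v = 0 →
      ∃ D : (Fin n → ℝ) →L[ℝ] (Fin n → ℝ),
        HasFDerivAt (fun x => (G x).2 + (G x).1 • v) D x ∧ Function.Injective D := by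
  let g : (Fin n → ℝ) → (Fin n → ℝ) := fun x => (-(G x).1)⁻¹ • (G x).2
  have hg : ∀ x, (G x).1 < 0 → DifferentiableAt ℝ g x := by
    intro x hx
    have h1 : DifferentiableAt ℝ (fun x => (G x).1) x := (hG x).fst
    have h2 : DifferentiableAt ℝ (fun x => (G x).2) x := (hG x).snd
    exact (h1.neg.inv (by simpa using hx.ne)).smul h2
  let s : Set (Fin n → ℝ) := {x | (G x).1 < 0 ∧ (fderiv ℝ g x).det = 0}
  have hs := MeasureTheory.addHaar_image_eq_zero_of_det_fderivWithin_eq_zero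
    MeasureTheory.volume (s := s) (f := g) (f' := fun x => fderiv ℝ g x)
    (fun x hx => (hg x hx.1).hasFDerivAt.hasFDerivWithinAt) (fun x hx => hx.2)
  have : ∃ v, v ∉ g '' s := by
    by_contra hcon
    push Not at hcon
    have : g '' s = Set.univ := Set.eq_univ_of_forall hcon
    rw [this] at hs
    exact (MeasureTheory.Measure.measure_univ_ne_zero.mpr (NeZero.ne _)) hs
  obtain ⟨v, hv⟩ := this
  refine ⟨v, fun x hx hz => ?_⟩
  have hgx : g x = v := by
    have : (G x).2 = (-(G x).1) • v := by rw [neg_smul, eq_neg_iff_add_eq_zero]; exact hz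
    change (-(G x).1)⁻¹ • (G x).2 = v
    rw [this, smul_smul, inv_mul_cancel₀ (by simpa using hx.ne), one_smul]
  have hdet : (fderiv ℝ g x).det ≠ 0 := fun h => hv ⟨x, ⟨hx, h⟩, hgx⟩
  have hev : (fun x => (G x).2 + (G x).1 • v) =ᶠ[𝓝 x] fun x => (-(G x).1) • (g x - v) := by
    have : ∀ᶠ y in 𝓝 x, (G y).1 < 0 :=
      (hG.continuous.fst.continuousAt).eventually_lt continuousAt_const hx
    filter_upwards [this] with y hy
    change _ = (-(G y).1) • ((-(G y).1)⁻¹ • (G y).2 - v)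
    rw [smul_sub, smul_smul, mul_inv_cancel₀ (by simpa using hy.ne), one_smul, neg_smul,
      sub_neg_eq_add]
  have h1 : HasFDerivAt (fun x => -(G x).1) _ x := (hG x).fst.neg.hasFDerivAt
  have h2 : HasFDerivAt (fun x => g x - v) _ x := (hg x hx).hasFDerivAt.sub_const v
  refine ⟨_, (h1.smul h2).congr_of_eventuallyEq hev, ?_⟩
  rw [injective_iff_map_eq_zero]
  intro w hw
  simp [hgx, hx.ne] at hw
  have hu : IsUnit (fderiv ℝ g x : (Fin n → ℝ) →ₗ[ℝ] (Fin n → ℝ)) := by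
    rw [LinearMap.isUnit_iff_isUnit_det]
    exact isUnit_iff_ne_zero.mpr hdet
  have hinj := ((Module.End.isUnit_iff _).mp hu).1
  exact hinj (by simpa using hw)

theorem loop_nice (f : Ω^ (Fin n) (S n) (e0 n)) :
    ∃ F : (Fin n → ℝ) → ℝ × (Fin n → ℝ), Nice F ∧ Cls F (cl f) := by
  let F : (Fin n → ℝ) → ℝ × (Fin n → ℝ) := fun x => unS (f (pj x))
  have hF : Continuous F := continuous_unS.comp ((map_continuous f).comp continuous_pj)
  have hF0 : ∀ x, F x ≠ 0 := fun x => unS_ne _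
  have hFb : ∀ x ∈ bdy n, F x = (1, 0) := fun x hx => by
    change unS (f (pj x)) = _
    rw [show f (pj x) = e0 n from f.2 _ (pj_bdy hx), unS_e0]
  have hcF : Cls F (cl f) := Cls.loop f
  obtain ⟨G, hGs, hG, -⟩ := hF.exists_contDiff_approx 1 (ε := fun x => ‖F x‖ / 2)
    (by fun_prop) (fun x => by have := norm_pos_iff.mpr (hF0 x); positivity)
  have hGd : Differentiable ℝ G := hGs.differentiable (by norm_num)
  have hGb : ∀ x ∈ bdy n, 1 / 2 < (G x).1 := fun x hx => by
    have h1 := hG x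
    rw [hFb x hx] at h1
    have h2 : dist (G x).1 1 ≤ dist (G x) (1, 0) := le_max_left _ _
    have h3 : ‖((1, 0) : ℝ × (Fin n → ℝ))‖ = 1 := by simp [Prod.norm_def]
    rw [h3] at h1
    have := (abs_lt.mp (lt_of_le_of_lt h2 h1)).1
    linarith
  have hseg : ∀ t ∈ Set.Icc (0:ℝ) 1, ∀ x, (1 - t) • F x + t • G x ≠ 0 := by
    intro t ht x h
    have h1 := hG x
    rw [dist_eq_norm] at h1
    have e : F x = - (t • (G x - F x)) := by
      rw [eq_neg_iff_add_eq_zero, ← h]; module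
    have h2 : ‖F x‖ ≤ ‖G x - F x‖ := by
      conv_lhs => rw [e]
      rw [norm_neg, norm_smul, Real.norm_of_nonneg ht.1]
      exact mul_le_of_le_one_left (norm_nonneg _) ht.2
    have := norm_pos_iff.mpr (hF0 x)
    linarith
  have hcG : Cls G (cl f) := by
    have hGc := hGd.continuous
    have := Cls.homotopy (fun t x => (1 - t) • F x + t • G x) (by fun_prop)
      (fun t ht x _ => hseg t ht x) ?_ (a := cl f) (by simpa using hcF)
    · simpa using this
    · intro t ht x _ hb _
      have h1 := hGb x hb
      simp only [hFb x hb, Prod.fst_add, Prod.smul_fst, smul_eq_mul]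
      nlinarith [ht.1, ht.2]
  have hG0 : ∀ x, G x ≠ 0 := fun x => by simpa using hseg 1 (by simp) x
  obtain ⟨v, hv⟩ := exists_regular hGd
  let E : ℝ → (Fin n → ℝ) → ℝ × (Fin n → ℝ) := fun t x => ((G x).1, (G x).2 + (G x).1 • t • v)
  have hEc : Continuous fun z : ℝ × (Fin n → ℝ) => E z.1 z.2 := by
    have hGc := hGd.continuous
    fun_prop
  have hE0 : ∀ t x, E t x ≠ 0 := fun t x h => by
    have h1 : (G x).1 = 0 := congrArg Prod.fst h
    have h2 : (G x).2 + (G x).1 • t • v = 0 := congrArg Prod.snd h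
    rw [h1, zero_smul, add_zero] at h2
    exact hG0 x (Prod.ext h1 h2)
  have hEb : ∀ t, ∀ x ∈ bdy n, 0 < (E t x).1 := fun t x hx => by
    have := hGb x hx
    change 0 < (G x).1
    linarith
  have hcE : Cls (E 1) (cl f) := Cls.homotopy E hEc (fun t _ x _ => hE0 t x)
    (fun t _ x _ hb _ => hEb t x hb) (by simpa [E] using hcG)
  have hE1 : Continuous (E 1) := hEc.comp (Continuous.prodMk_right 1)
  have hnd : ∀ x ∈ Zs (E 1), ∃ D : (Fin n → ℝ) →L[ℝ] (Fin n → ℝ),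
    HasFDerivAt (fun x => (E 1 x).2) D x ∧ Function.Injective D := by
    intro x hx
    obtain ⟨D, hD, hinj⟩ := hv x hx.2.2 (by simpa [E] using hx.2.1)
    exact ⟨D, by simpa [E] using hD, hinj⟩
  refine ⟨E 1, ⟨⟨hE1, fun x _ => hE0 1 x, fun x _ hb _ => hEb 1 x hb⟩, ?_, hnd⟩, hcE⟩
  by_contra hinf
  have hcl : IsClosed (Zs (E 1)) := by
    have : Zs (E 1) = {x | x ∈ Q n ∧ (E 1 x).2 = 0 ∧ (E 1 x).1 ≤ 0} := by
      ext x
      refine and_congr_right fun _ => and_congr_right fun h => ⟨le_of_lt, fun h' => ?_⟩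
      exact lt_of_le_of_ne h' fun h'' => hE0 1 x (Prod.ext h'' h)
    rw [this]
    exact isCompact_Q.isClosed.inter ((isClosed_eq hE1.snd continuous_const).inter
      (isClosed_le hE1.fst continuous_const))
  have hsub : Zs (E 1) ⊆ Q n := fun x hx => hx.1
  obtain ⟨x, -, hx⟩ := Set.Infinite.exists_accPt_of_subset_isCompact hinf isCompact_Q hsub
  have hxZ : x ∈ Zs (E 1) := by
    have := hx.clusterPt.mem_closure
    rwa [hcl.closure_eq] at this
  obtain ⟨D, hD, hinj⟩ := hnd x hxZ
  have hanti : ∃ C, AntilipschitzWith C D := by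
    obtain ⟨K, -, hK⟩ := LinearMap.exists_antilipschitzWith
      (D : (Fin n → ℝ) →ₗ[ℝ] (Fin n → ℝ)) (LinearMap.ker_eq_bot.mpr hinj)
    exact ⟨K, hK⟩
  have hne := hD.eventually_ne (c := 0) hanti
  rw [accPt_iff_frequently_nhdsNE] at hx
  obtain ⟨y, hy1, hy2⟩ := (hx.and_eventually hne).exists
  exact hy2 hy1.2.1

variable [Nonempty (Fin n)]

theorem zpowers_eq_top {ι : HomotopyGroup (Fin n) (S n) (e0 n)}
    (hι : ∀ A : Matrix (Fin n) (Fin n) ℝ, ∀ x0 ∈ Qi n,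
      (0 < A.det → Cls (Lin A x0) ι) ∧ (A.det < 0 → Cls (Lin A x0) ι⁻¹)) :
    Subgroup.zpowers ι = ⊤ := by
  rw [eq_top_iff]
  intro a _
  obtain ⟨f, rfl⟩ := cl_surj a
  obtain ⟨F, hF, hc⟩ := loop_nice f
  obtain ⟨a, ha, hca⟩ := Nice.cls hι _ F hF le_rfl
  rwa [hc.unique hca]

end Steenrod

namespace Steenrod
open scoped unitInterval Topology Topology.Homotopy
open GenLoop

variable {n : ℕ}

/-! ### Recognizing classes -/

theorem cls_of_values (g : Ω^ (Fin n) (S n) (e0 n)) {F : (Fin n → ℝ) → ℝ × (Fin n → ℝ)}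
    (hF : Continuous F) (h : ∀ x ∈ Q n, ∃ c : ℝ, 0 < c ∧ unS (g (pj x)) = c • F x) :
    Cls F (cl g) := by
  refine Cls.line (continuous_unS.comp ((map_continuous g).comp continuous_pj)) hF
    (fun x hx => ?_) (Cls.loop g)
  obtain ⟨c, hc, he⟩ := h x hx
  have hne := unS_ne (g (pj x))
  change (∀ t ∈ Set.Icc (0:ℝ) 1, (1 - t) • (unS (g (pj x))).2 + t • (F x).2 ≠ 0) ∨
      (0 < (unS (g (pj x))).1 ∧ 0 < (F x).1) ∨ (x ∉ bdy n ∧ (unS (g (pj x))).1 < 0 ∧ (F x).1 < 0)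
  by_cases h2 : (F x).2 = 0
  · right
    have h1 : (F x).1 ≠ 0 := by
      intro h1
      have h3 : F x = 0 := Prod.ext h1 h2
      rw [he, h3, smul_zero] at hne
      exact hne rfl
    rcases lt_or_gt_of_ne h1 with h1 | h1
    · right
      have h3 : (unS (g (pj x))).1 < 0 := by
        rw [he]; exact mul_neg_of_pos_of_neg hc h1
      refine ⟨fun hb => ?_, h3, h1⟩
      rw [show g (pj x) = e0 n from g.2 _ (pj_bdy hb), unS_e0] at h3
      norm_num at h3
    · left
      exact ⟨by rw [he]; exact mul_pos hc h1, h1⟩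
  · left
    intro t ht
    rw [he, Prod.smul_snd, smul_smul, ← add_smul]
    refine smul_ne_zero ?_ h2
    rcases eq_or_lt_of_le ht.1 with h0 | h0
    · rw [← h0]; simpa using hc.ne'
    · have : 0 ≤ (1 - t) * c := mul_nonneg (sub_nonneg.mpr ht.2) hc.le
      positivity

theorem Nice.Qi {F : (Fin n → ℝ) → ℝ × (Fin n → ℝ)} (hF : Nice F) {z} (hz : z ∈ Zs F) :
    z ∈ Qi n := by
  refine Q_not_bdy hz.1 fun hb => ?_
  have := hF.adm.bd z hz.1 hb hz.2.1
  have := hz.2.2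
  linarith

theorem Nice.pos {F : (Fin n → ℝ) → ℝ × (Fin n → ℝ)} (hF : Nice F) {z} (hz : ∀ x ∈ Zs F, x = z) :
    ∀ x ∈ Q n, (F x).2 = 0 → 0 < (F x).1 ∨ x = z := by
  intro x hx h0
  rcases hF.adm.trichotomy hx with h | h | h
  · exact absurd h0 h
  · exact Or.inl h.2
  · exact Or.inr (hz x ⟨hx, h.1, h.2.2⟩)

/-- The matrix of the coordinate stretching. -/
theorem strB_mulVec (i : Fin n) (β : ℝ) (v : Fin n → ℝ) :
    strB i β v = Matrix.diagonal (fun k => if k = i then β else 1) *ᵥ v := by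
  funext k
  rw [strB_apply, Matrix.mulVec_diagonal]

section
variable [Nonempty (Fin n)]
variable {ι : HomotopyGroup (Fin n) (S n) (e0 n)}

/-- The class governing the affine maps. -/
def IsGen (ι : HomotopyGroup (Fin n) (S n) (e0 n)) : Prop :=
  ∀ A : Matrix (Fin n) (Fin n) ℝ, ∀ x0 ∈ Qi n,
      (0 < A.det → Cls (Lin A x0) ι) ∧ (A.det < 0 → Cls (Lin A x0) ι⁻¹)

theorem half_zero (hι : IsGen ι) {F : (Fin n → ℝ) → ℝ × (Fin n → ℝ)} (hF : Nice F) (i : Fin n) {α β : ℝ}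
    (hα : 0 ≤ α) (hβ : 0 < β) (hαβ : α + β ≤ 1)
    (h0 : α = 0 ∨ ∀ x ∈ Zs F, x i ≠ α) (h1 : α + β = 1 ∨ ∀ x ∈ Zs F, x i ≠ α + β)
    {z w : Fin n → ℝ} (hz : z ∈ Zs F) (hw : w ∈ Zs F) (hzw : ∀ x ∈ Zs F, x = z ∨ x = w)
    (hzi : z i ∈ Set.Icc α (α + β)) (hwi : w i < α ∨ α + β < w i)
    {D : (Fin n → ℝ) →L[ℝ] (Fin n → ℝ)}
    (hD : HasFDerivAt (fun x => (F x).2) D z) {A : Matrix (Fin n) (Fin n) ℝ}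
    (hA : ∀ v, D v = A *ᵥ v) (hdet : A.det < 0) :
    Cls (fun x => F (Function.update x i (α + β * x i))) ι⁻¹ := by
  obtain ⟨hN, -⟩ := hF.stretch i hα hβ hαβ h0 h1 hw hwi
  let z' : Fin n → ℝ := Function.update z i ((z i - α) / β)
  have hMz : Function.update z' i (α + β * z' i) = z := by
    funext k
    by_cases hk : k = i
    · subst hk
      simp [z']
      field_simp
      ring
    · simp [z', hk]
  have hz' : z' ∈ Zs (fun x => F (Function.update x i (α + β * x i))) := by
    refine ⟨fun k => ?_, ?_⟩
    · by_cases hk : k = i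
      · subst hk
        simp only [z', Function.update_self]
        refine ⟨div_nonneg (by linarith [hzi.1]) hβ.le, ?_⟩
        rw [div_le_one hβ]
        linarith [hzi.2]
      · simpa [z', hk] using hz.1 k
    · simp only [hMz]
      exact hz.2
  have huniq : ∀ x ∈ Zs (fun x => F (Function.update x i (α + β * x i))), x = z' := by
    intro x hx
    have hxQ : Function.update x i (α + β * x i) ∈ Zs F := by
      refine ⟨fun k => ?_, hx.2⟩
      by_cases hk : k = i
      · subst hk
        rw [Function.update_self]
        have := hx.1 k
        constructor
        · have := mul_nonneg hβ.le this.1; linarith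
        · have := mul_le_of_le_one_right hβ.le this.2; linarith
      · simpa [hk] using hx.1 k
    have hxz : Function.update x i (α + β * x i) = z := by
      refine (hzw _ hxQ).resolve_right fun h => ?_
      have e := congrFun h i
      rw [Function.update_self] at e
      have hxi := hx.1 i
      rw [← e] at hwi
      rcases hwi with h | h
      · have := mul_nonneg hβ.le hxi.1; linarith
      · have := mul_le_of_le_one_right hβ.le hxi.2; linarith
    rw [← hMz, update_eq_str, update_eq_str] at hxz
    exact strB_inj i hβ (add_left_cancel hxz)
  have hder : HasFDerivAt (fun x => (F (Function.update x i (α + β * x i))).2)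
      (D.comp (strB i β)) z' := by
    have h1 : HasFDerivAt (fun x : Fin n → ℝ => Function.update x i (α + β * x i))
        (strB i β) z' := by
      have : (fun x : Fin n → ℝ => Function.update x i (α + β * x i)) =
        fun x => Pi.single i α + strB i β x := funext fun x => update_eq_str i α β x
      rw [this]
      exact (strB i β).hasFDerivAt.const_add _
    rw [← hMz] at hD
    exact hD.comp z' h1
  have hdet' : (A * Matrix.diagonal (fun k => if k = i then β else 1)).det < 0 := by
    rw [Matrix.det_mul, Matrix.det_diagonal]
    refine mul_neg_of_neg_of_pos hdet (Finset.prod_pos fun k _ => ?_)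
    split_ifs
    · exact hβ
    · exact one_pos
  refine single_zero hN.adm (hN.Qi hz') (hN.pos huniq) hz'.2.1 hz'.2.2 hder
    (A := A * Matrix.diagonal (fun k => if k = i then β else 1)) ?_ hdet'.ne
    ((hι _ _ (hN.Qi hz')).2 hdet')
  intro v
  rw [← Matrix.mulVec_mulVec, ← strB_mulVec, ← hA]
  rfl

theorem two_zero (hι : IsGen ι) {F : (Fin n → ℝ) → ℝ × (Fin n → ℝ)} (hF : Nice F) (i : Fin n) {t : ℝ}
    {z w : Fin n → ℝ} (hz : z ∈ Zs F) (hw : w ∈ Zs F) (hzw : ∀ x ∈ Zs F, x = z ∨ x = w)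
    (hzi : z i < t) (hwi : t < w i)
    {D E : (Fin n → ℝ) →L[ℝ] (Fin n → ℝ)}
    (hD : HasFDerivAt (fun x => (F x).2) D z) {A : Matrix (Fin n) (Fin n) ℝ}
    (hA : ∀ v, D v = A *ᵥ v) (hdet : A.det < 0)
    (hE : HasFDerivAt (fun x => (F x).2) E w) {B : Matrix (Fin n) (Fin n) ℝ}
    (hB : ∀ v, E v = B *ᵥ v) (hdetB : B.det < 0) : Cls F (ι⁻¹ * ι⁻¹) := by
  have ht0 : 0 < t := lt_of_le_of_lt (hz.1 i).1 hzi
  have ht1 : t < 1 := lt_of_lt_of_le hwi (hw.1 i).2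
  have htn : ∀ x ∈ Zs F, x i ≠ t := by
    intro x hx
    rcases hzw x hx with rfl | rfl
    · exact hzi.ne
    · exact hwi.ne'
  refine Cls.split hF.adm i ⟨ht0.le, ht1.le⟩ ?_ ?_
  · convert half_zero hι hF i (α := 0) (β := t) le_rfl ht0 (by linarith) (Or.inl rfl)
      (Or.inr (by simpa using htn)) hz hw hzw ⟨(hz.1 i).1, by linarith⟩ (Or.inr (by linarith))
      hD hA hdet using 4
    ring
  · convert half_zero hι hF i (α := t) (β := 1 - t) ht0.le (by linarith) (by linarith)
      (Or.inr htn) (Or.inl (by ring)) hw hz (fun x hx => (hzw x hx).symm)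
      ⟨hwi.le, by linarith [(hw.1 i).2]⟩ (Or.inl hzi) hE hB hdetB using 4
    ring

end

/-! ### The quadratic maps coming from reflections -/

/-- The (rescaled) image of the base vector under the reflection along `V x`. -/
def quad (V : (Fin n → ℝ) → ℝ × (Fin n → ℝ)) (x : Fin n → ℝ) : ℝ × (Fin n → ℝ) :=
  ((V x).2 ⬝ᵥ (V x).2 - (V x).1 ^ 2, (-2 * (V x).1) • (V x).2)

/-- The vector fields we use. -/
structure Fld (V : (Fin n → ℝ) → ℝ × (Fin n → ℝ)) : Prop where
  diff : Differentiable ℝ V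
  ne : ∀ x ∈ Q n, V x ≠ 0
  bd : ∀ x ∈ Q n, x ∈ bdy n → (V x).1 = 0

theorem Fld.cont {V : (Fin n → ℝ) → ℝ × (Fin n → ℝ)} (hV : Fld V) : Continuous (quad V) := by
  have h := hV.diff.continuous
  unfold quad
  refine Continuous.prodMk (Continuous.sub (h.snd.dotProduct h.snd) (by fun_prop)) (by fun_prop)

theorem Fld.adm {V : (Fin n → ℝ) → ℝ × (Fin n → ℝ)} (hV : Fld V) : Adm (quad V) where
  cont := hV.cont
  ne x hx h := by
    have h1 : (V x).2 ⬝ᵥ (V x).2 - (V x).1 ^ 2 = 0 := congrArg Prod.fst h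
    have h2 : (-2 * (V x).1) • (V x).2 = 0 := congrArg Prod.snd h
    rcases smul_eq_zero.mp h2 with h2 | h2
    · have h3 : (V x).1 = 0 := by linarith
      rw [h3] at h1
      have h4 : (V x).2 = 0 := dotProduct_self_eq_zero.mp (by linarith)
      exact hV.ne x hx (Prod.ext h3 h4)
    · rw [h2] at h1
      have h3 : (V x).1 = 0 := by simpa using h1
      exact hV.ne x hx (Prod.ext h3 h2)
  bd x hx hb _ := by
    have h3 := hV.bd x hx hb
    have h4 : (V x).2 ≠ 0 := fun h => hV.ne x hx (Prod.ext h3 h)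
    change 0 < (V x).2 ⬝ᵥ (V x).2 - (V x).1 ^ 2
    have h5 := dot_self_ne h4
    have h6 : 0 ≤ (V x).2 ⬝ᵥ (V x).2 := Finset.sum_nonneg fun i _ => mul_self_nonneg _
    have := lt_of_le_of_ne h6 h5.symm
    rw [h3]
    simpa using this

theorem Fld.zs {V : (Fin n → ℝ) → ℝ × (Fin n → ℝ)} (hV : Fld V) {x : Fin n → ℝ} :
    x ∈ Zs (quad V) ↔ x ∈ Q n ∧ (V x).2 = 0 := by
  constructor
  · rintro ⟨hx, h1, h2⟩
    refine ⟨hx, ?_⟩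
    have h1 : (-2 * (V x).1) • (V x).2 = 0 := h1
    have h2 : (V x).2 ⬝ᵥ (V x).2 - (V x).1 ^ 2 < 0 := h2
    rcases smul_eq_zero.mp h1 with h | h
    · have h3 : (V x).1 = 0 := by linarith
      rw [h3] at h2
      have h6 : 0 ≤ (V x).2 ⬝ᵥ (V x).2 := Finset.sum_nonneg fun i _ => mul_self_nonneg _
      linarith
    · exact h
  · rintro ⟨hx, h⟩
    have h1 : (V x).1 ≠ 0 := fun h1 => hV.ne x hx (Prod.ext h1 h)
    refine ⟨hx, ?_, ?_⟩
    · change (-2 * (V x).1) • (V x).2 = 0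
      rw [h, smul_zero]
    · change (V x).2 ⬝ᵥ (V x).2 - (V x).1 ^ 2 < 0
      rw [h]
      have := sq_pos_of_ne_zero h1
      simpa using this

theorem Fld.deriv {V : (Fin n → ℝ) → ℝ × (Fin n → ℝ)} (hV : Fld V) {z : Fin n → ℝ}
    (hz : (V z).2 = 0) {D : (Fin n → ℝ) →L[ℝ] (Fin n → ℝ)}
    (hD : HasFDerivAt (fun x => (V x).2) D z) :
    HasFDerivAt (fun x => (quad V x).2) ((-2 * (V z).1) • D) z := by
  have h1 : HasFDerivAt (fun x => -2 * (V x).1) _ z := ((hV.diff z).fst.const_mul (-2)).hasFDerivAt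
  have := h1.smul hD
  have e : (-2 * (V z).1) • D + (fderiv ℝ (fun y => -2 * (V y).1) z).smulRight (V z).2 =
      (-2 * (V z).1) • D := by
    ext v
    simp [hz]
  rw [e] at this
  exact this

theorem Fld.nice {V : (Fin n → ℝ) → ℝ × (Fin n → ℝ)} (hV : Fld V)
    (hfin : {x | x ∈ Q n ∧ (V x).2 = 0}.Finite)
    (h : ∀ z ∈ Q n, (V z).2 = 0 → ∃ D : (Fin n → ℝ) →L[ℝ] (Fin n → ℝ),
      HasFDerivAt (fun x => (V x).2) D z ∧ Function.Injective D) : Nice (quad V) where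
  adm := hV.adm
  fin := hfin.subset fun x hx => hV.zs.mp hx
  nd z hz := by
    obtain ⟨hz1, hz2⟩ := hV.zs.mp hz
    obtain ⟨D, hD, hi⟩ := h z hz1 hz2
    refine ⟨_, hV.deriv hz2 hD, ?_⟩
    have h1 : (V z).1 ≠ 0 := fun h1 => hV.ne z hz1 (Prod.ext h1 hz2)
    rw [injective_iff_map_eq_zero]
    intro v hv
    apply hi
    simpa [h1] using hv

/-- A loop obtained from reflections. -/
theorem Fld.cls {V : (Fin n → ℝ) → ℝ × (Fin n → ℝ)} (hV : Fld V) (g : Ω^ (Fin n) (S n) (e0 n))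
    (hg : ∀ y, ((g y : EuclideanSpace ℝ (Fin (n+1))) : Fin (n+1) → ℝ) =
      refl (Fin.cons (V (cc y)).1 (V (cc y)).2 : Fin (n+1) → ℝ) *ᵥ Pi.single 0 1) :
    Cls (quad V) (cl g) := by
  refine cls_of_values g hV.cont fun x hx => ?_
  have hg := hg (pj x)
  rw [cc_pj hx, refl_mulVec] at hg
  have hdot : (Fin.cons (V x).1 (V x).2 : Fin (n+1) → ℝ) ⬝ᵥ Fin.cons (V x).1 (V x).2 =
      (V x).1 ^ 2 + (V x).2 ⬝ᵥ (V x).2 := by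
    simp [dotProduct, Fin.sum_univ_succ, sq]
  have hdot' : (Fin.cons (V x).1 (V x).2 : Fin (n+1) → ℝ) ⬝ᵥ Pi.single 0 1 = (V x).1 := by
    simp
  have hpos : 0 < (V x).1 ^ 2 + (V x).2 ⬝ᵥ (V x).2 := by
    rw [← hdot]
    refine lt_of_le_of_ne (Finset.sum_nonneg fun i _ => mul_self_nonneg _) ?_
    refine (dot_self_ne fun h => hV.ne x hx ?_).symm
    exact Prod.ext (congrFun h 0) (funext fun i => congrFun h i.succ)
  rw [hdot, hdot'] at hg
  refine ⟨((V x).1 ^ 2 + (V x).2 ⬝ᵥ (V x).2)⁻¹, inv_pos.mpr hpos, ?_⟩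
  have hpos' := hpos.ne'
  refine Prod.ext ?_ (funext fun i => ?_)
  · have := congrFun hg 0
    change (g (pj x)).1 0 = _
    rw [this]
    simp [quad]
    field_simp
    ring
  · have := congrFun hg i.succ
    change (g (pj x)).1 i.succ = _
    rw [this]
    simp [quad]
    field_simp

end Steenrod

namespace Steenrod
open scoped unitInterval Topology Topology.Homotopy
open GenLoop

variable {n : ℕ}

/-! ### The explicit vector fields -/

/-- A function vanishing exactly on the boundary of the cube. -/
def bb (s : Fin n → ℝ) : ℝ := ∏ i, (1 - (2 * s i - 1) ^ 2)

theorem bb_diff : Differentiable ℝ (bb (n := n)) := by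
  unfold bb
  fun_prop

theorem bb_pos {s : Fin n → ℝ} (hs : s ∈ Qi n) : 0 < bb s := by
  refine Finset.prod_pos fun i _ => ?_
  have := hs i
  nlinarith [this.1, this.2, mul_pos this.1 (sub_pos.mpr this.2)]

theorem bb_bdy {s : Fin n → ℝ} (hs : s ∈ bdy n) : bb s = 0 := by
  obtain ⟨i, hi⟩ := hs
  refine Finset.prod_eq_zero (Finset.mem_univ i) ?_
  rcases hi with hi | hi <;> rw [hi] <;> norm_num

/-- The sum of squares of the centered coordinates. -/
def ss (s : Fin n → ℝ) : ℝ := ∑ i, (2 * s i - 1) ^ 2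

theorem ss_diff : Differentiable ℝ (ss (n := n)) := by
  unfold ss
  fun_prop

theorem ss_bdy {s : Fin n → ℝ} (hs : s ∈ bdy n) : 1 ≤ ss s := by
  obtain ⟨i, hi⟩ := hs
  have h1 : (2 * s i - 1) ^ 2 ≤ ss s :=
    Finset.single_le_sum (f := fun i => (2 * s i - 1) ^ 2) (fun i _ => sq_nonneg _)
      (Finset.mem_univ i)
  refine le_trans ?_ h1
  rcases hi with hi | hi <;> rw [hi] <;> norm_num

theorem ss_single {s : Fin n → ℝ} (i0 : Fin n) (hs : ∀ i, i ≠ i0 → 2 * s i - 1 = 0) :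
    ss s = (2 * s i0 - 1) ^ 2 := by
  unfold ss
  rw [Finset.sum_eq_single i0]
  · intro i _ hi
    rw [hs i hi]; norm_num
  · simp

theorem ss_deriv {s : Fin n → ℝ} (i0 : Fin n) (hs : ∀ i, i ≠ i0 → 2 * s i - 1 = 0) :
    HasFDerivAt (ss (n := n)) ((4 * (2 * s i0 - 1)) •
      (ContinuousLinearMap.proj i0 : (Fin n → ℝ) →L[ℝ] ℝ)) s := by
  have h : ∀ i : Fin n, HasFDerivAt (fun s : Fin n → ℝ => (2 * s i - 1) ^ 2)
      ((4 * (2 * s i - 1)) • (ContinuousLinearMap.proj i : (Fin n → ℝ) →L[ℝ] ℝ)) s := by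
    intro i
    have h1 : HasFDerivAt (fun s : Fin n → ℝ => s i)
      (ContinuousLinearMap.proj i : (Fin n → ℝ) →L[ℝ] ℝ) s := hasFDerivAt_apply i s
    have h2 := ((h1.const_mul 2).sub_const 1).pow 2
    refine h2.congr_fderiv ?_
    ext v
    simp
    ring
  have := HasFDerivAt.fun_sum (u := Finset.univ) (fun i _ => h i)
  refine this.congr_fderiv ?_
  rw [Finset.sum_eq_single i0]
  · intro i _ hi
    rw [hs i hi]; simp
  · simp

theorem mul_deriv {u v : (Fin n → ℝ) → ℝ} {z : Fin n → ℝ} {L : (Fin n → ℝ) →L[ℝ] ℝ}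
    (hu : DifferentiableAt ℝ u z) (hv : HasFDerivAt v L z) (h0 : v z = 0) :
    HasFDerivAt (fun x => u x * v x) (u z • L) z := by
  refine (hu.hasFDerivAt.mul hv).congr_fderiv ?_
  ext w
  simp [h0]

theorem tau_deriv (i : Fin n) (s : Fin n → ℝ) : HasFDerivAt (fun s : Fin n → ℝ => 2 * s i - 1)
    ((2:ℝ) • (ContinuousLinearMap.proj i : (Fin n → ℝ) →L[ℝ] ℝ)) s := by
  have h1 : HasFDerivAt (fun s : Fin n → ℝ => s i)
      (ContinuousLinearMap.proj i : (Fin n → ℝ) →L[ℝ] ℝ) s := hasFDerivAt_apply i s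
  refine ((h1.const_mul 2).sub_const 1).congr_fderiv ?_
  ext v
  simp

/-- The field on the cube of dimension `n`. -/
noncomputable def XF (i0 : Fin n) (s : Fin n → ℝ) : ℝ × (Fin n → ℝ) :=
  (bb s * (2 * s i0 - 1), fun i => if i = i0 then ss s - 1 / 2 else bb s * (2 * s i - 1))

theorem XF_same (i0 : Fin n) (s : Fin n → ℝ) : (XF i0 s).2 i0 = ss s - 1 / 2 := by simp [XF]

theorem XF_other {i0 i : Fin n} (h : i ≠ i0) (s : Fin n → ℝ) :
    (XF i0 s).2 i = bb s * (2 * s i - 1) := by simp [XF, h]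

theorem XF_diff (i0 : Fin n) : Differentiable ℝ (XF i0) := by
  have h1 := bb_diff (n := n)
  have h2 := ss_diff (n := n)
  unfold XF
  refine Differentiable.prodMk (by fun_prop) ?_
  rw [differentiable_pi]
  intro i
  by_cases hi : i = i0
  · simp only [hi, if_true]; fun_prop
  · simp only [hi, if_false]; fun_prop

theorem XF_bdy (i0 : Fin n) {s : Fin n → ℝ} (hb : s ∈ bdy n) :
    (XF i0 s) = (0, (ss s - 1 / 2) • Pi.single i0 1) := by
  refine Prod.ext ?_ (funext fun i => ?_)
  · simp [XF, bb_bdy hb]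
  · by_cases hi : i = i0
    · subst hi; simp [XF]
    · simp [XF, hi, bb_bdy hb]

theorem XF_fld (i0 : Fin n) : Fld (XF i0) where
  diff := XF_diff i0
  ne s hs h := by
    by_cases hb : s ∈ bdy n
    · have h1 := XF_same i0 s
      rw [h] at h1
      have := ss_bdy hb
      change (0:ℝ) = _ at h1
      linarith
    · have hp := bb_pos (Q_not_bdy hs hb)
      have h0 : bb s * (2 * s i0 - 1) = 0 := congrArg Prod.fst h
      have h0 : 2 * s i0 - 1 = 0 := (mul_eq_zero.mp h0).resolve_left hp.ne'
      have h1 : ∀ i, i ≠ i0 → 2 * s i - 1 = 0 := fun i hi => by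
        have := XF_other hi s
        rw [h] at this
        exact (mul_eq_zero.mp this.symm).resolve_left hp.ne'
      have h2 := XF_same i0 s
      rw [h, ss_single i0 h1, h0] at h2
      change (0:ℝ) = _ at h2
      norm_num at h2
  bd s hs hb := by rw [XF_bdy i0 hb]

theorem XF_zero (i0 : Fin n) {s : Fin n → ℝ} (hs : s ∈ Q n) (h : (XF i0 s).2 = 0) :
    s ∈ Qi n ∧ (∀ i, i ≠ i0 → 2 * s i - 1 = 0) ∧ (2 * s i0 - 1) ^ 2 = 1 / 2 := by
  have h1 := XF_same i0 s
  rw [h] at h1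
  change (0:ℝ) = _ at h1
  have hb : s ∉ bdy n := fun hb => by
    have := ss_bdy hb
    linarith
  have hp := bb_pos (Q_not_bdy hs hb)
  have h2 : ∀ i, i ≠ i0 → 2 * s i - 1 = 0 := fun i hi => by
    have := XF_other hi s
    rw [h] at this
    exact (mul_eq_zero.mp this.symm).resolve_left hp.ne'
  rw [ss_single i0 h2] at h1
  exact ⟨Q_not_bdy hs hb, h2, by linarith⟩

/-- The diagonal derivative. -/
noncomputable def dg (d : Fin n → ℝ) : (Fin n → ℝ) →L[ℝ] (Fin n → ℝ) :=
  ContinuousLinearMap.pi fun i => d i • ContinuousLinearMap.proj i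

theorem dg_apply (d v : Fin n → ℝ) : dg d v = Matrix.diagonal d *ᵥ v := by
  funext i
  rw [Matrix.mulVec_diagonal]
  simp [dg]

theorem XF_deriv (i0 : Fin n) {s : Fin n → ℝ} (h : ∀ i, i ≠ i0 → 2 * s i - 1 = 0) :
    HasFDerivAt (fun s => (XF i0 s).2)
      (dg fun i => if i = i0 then 4 * (2 * s i0 - 1) else bb s * 2) s := by
  rw [hasFDerivAt_pi']
  intro i
  by_cases hi : i = i0
  · subst hi
    simp only [XF_same]
    refine ((ss_deriv i h).sub_const _).congr_fderiv ?_
    ext v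
    simp [dg]
  · simp only [XF_other hi]
    refine (mul_deriv (bb_diff s) (tau_deriv i s) (h i hi)).congr_fderiv ?_
    ext v
    simp [dg, hi]
    ring

theorem XF_det (i0 : Fin n) (hn : Odd n) {s : Fin n → ℝ} (hs : s ∈ Q n) (h : (XF i0 s).2 = 0) :
    ∃ D : (Fin n → ℝ) →L[ℝ] (Fin n → ℝ), ∃ A : Matrix (Fin n) (Fin n) ℝ,
      HasFDerivAt (fun s => (quad (XF i0) s).2) D s ∧ (∀ v, D v = A *ᵥ v) ∧ A.det < 0 := by
  obtain ⟨hq, h1, h2⟩ := XF_zero i0 hs h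
  have hp := bb_pos hq
  refine ⟨_, (-2 * (XF i0 s).1) •
      Matrix.diagonal (fun i => if i = i0 then 4 * (2 * s i0 - 1) else bb s * 2),
      (XF_fld i0).deriv h (XF_deriv i0 h1), fun v => ?_, ?_⟩
  · rw [Matrix.smul_mulVec, ← dg_apply]
    rfl
  · have e : (-2 * (XF i0 s).1) •
      Matrix.diagonal (fun i => if i = i0 then 4 * (2 * s i0 - 1) else bb s * 2) =
      Matrix.diagonal (fun i => (-2 * (bb s * (2 * s i0 - 1))) *
        (if i = i0 then 4 * (2 * s i0 - 1) else bb s * 2)) := by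
      rw [← Matrix.diagonal_smul]
      rfl
    rw [e, Matrix.det_diagonal, ← Finset.mul_prod_erase _ _ (Finset.mem_univ i0)]
    have e2 : ∏ x ∈ Finset.univ.erase i0, (-2 * (bb s * (2 * s i0 - 1))) *
        (if x = i0 then 4 * (2 * s i0 - 1) else bb s * 2) =
        (-4 * (bb s) ^ 2 * (2 * s i0 - 1)) ^ (n - 1) := by
      rw [Finset.prod_congr rfl (g := fun _ => -4 * (bb s) ^ 2 * (2 * s i0 - 1))]
      · rw [Finset.prod_const, Finset.card_erase_of_mem (Finset.mem_univ _)]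
        simp
      · intro x hx
        rw [if_neg (Finset.ne_of_mem_erase hx)]
        ring
    rw [e2]
    have hev : Even (n - 1) := by
      obtain ⟨k, hk⟩ := hn
      exact ⟨k, by omega⟩
    have hτ : 2 * s i0 - 1 ≠ 0 := by
      intro h0; rw [h0] at h2; norm_num at h2
    refine mul_neg_of_neg_of_pos ?_ (hev.pow_pos ?_)
    · rw [if_pos rfl]
      have : -2 * (bb s * (2 * s i0 - 1)) * (4 * (2 * s i0 - 1)) =
        -8 * bb s * (2 * s i0 - 1) ^ 2 := by ring
      rw [this, h2]
      linarith
    · have := hp.ne'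
      simp [hτ, this]

/-- The two zeros of the field. -/
noncomputable def zz (i0 : Fin n) (r : ℝ) : Fin n → ℝ := fun i => if i = i0 then (1 + r) / 2 else 1 / 2

theorem zz_zero (i0 : Fin n) {r : ℝ} (hr : r ^ 2 = 1 / 2) :
    zz i0 r ∈ Q n ∧ (XF i0 (zz i0 r)).2 = 0 := by
  have h1 : ∀ i, i ≠ i0 → 2 * zz i0 r i - 1 = 0 := fun i hi => by simp [zz, hi]
  have h2 : 2 * zz i0 r i0 - 1 = r := by simp [zz]; ring
  have hb : r < 1 ∧ -1 < r := by constructor <;> nlinarith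
  refine ⟨fun i => ?_, funext fun i => ?_⟩
  · by_cases hi : i = i0
    · simp only [zz, hi, if_true]
      constructor <;> linarith
    · simp only [zz, hi, if_false]
      constructor <;> norm_num
  · by_cases hi : i = i0
    · rw [hi, XF_same, ss_single i0 h1, h2, hr]; simp
    · rw [XF_other hi, h1 i hi]; simp

theorem zz_eq (i0 : Fin n) {s : Fin n → ℝ} (h : ∀ i, i ≠ i0 → 2 * s i - 1 = 0) :
    s = zz i0 (2 * s i0 - 1) := by
  funext i
  by_cases hi : i = i0
  · simp [zz, hi]
  · have := h i hi
    simp [zz, hi]; linarith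

theorem XF_nice (i0 : Fin n) (hn : Odd n) : Nice (quad (XF i0)) := by
  refine ⟨(XF_fld i0).adm, ?_, fun z hz => ?_⟩
  · refine Set.Finite.subset (s := {zz i0 (√(1/2)), zz i0 (-√(1/2))}) (by simp) ?_
    intro s hs
    obtain ⟨hs1, hs2⟩ := (XF_fld i0).zs.mp hs
    obtain ⟨-, h1, h2⟩ := XF_zero i0 hs1 hs2
    have h3 : (√(1/2) : ℝ) ^ 2 = 1 / 2 := Real.sq_sqrt (by norm_num)
    rw [zz_eq i0 h1]
    rcases sq_eq_sq_iff_eq_or_eq_neg.mp (h2.trans h3.symm) with h | h <;> rw [h] <;> simp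
  · obtain ⟨h1, h2⟩ := (XF_fld i0).zs.mp hz
    obtain ⟨D, A, hD, hA, hdet⟩ := XF_det i0 hn h1 h2
    refine ⟨D, hD, ?_⟩
    rw [injective_iff_map_eq_zero]
    intro v hv
    exact mulVec_eq_zero_of_det hdet.ne (by rw [← hA]; exact hv)

theorem XF_cls (i0 : Fin n) (hn : Odd n) [Nonempty (Fin n)]
    {ι : HomotopyGroup (Fin n) (S n) (e0 n)} (hι : IsGen ι) :
    Cls (quad (XF i0)) (ι⁻¹ * ι⁻¹) := by
  have h3 : (√(1/2) : ℝ) ^ 2 = 1 / 2 := Real.sq_sqrt (by norm_num)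
  have hpos : 0 < √(1/2 : ℝ) := Real.sqrt_pos.mpr (by norm_num)
  have hz := zz_zero i0 (r := -√(1/2)) (by rw [neg_sq, h3])
  have hw := zz_zero i0 h3
  obtain ⟨D, A, hD, hA, hdet⟩ := XF_det i0 hn hz.1 hz.2
  obtain ⟨E, B, hE, hB, hdetB⟩ := XF_det i0 hn hw.1 hw.2
  refine two_zero hι (XF_nice i0 hn) i0 (t := 1 / 2) ((XF_fld i0).zs.mpr hz)
    ((XF_fld i0).zs.mpr hw) (fun x hx => ?_) ?_ ?_ hD hA hdet hE hB hdetB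
  · obtain ⟨hs1, hs2⟩ := (XF_fld i0).zs.mp hx
    obtain ⟨-, h1, h2⟩ := XF_zero i0 hs1 hs2
    rw [zz_eq i0 h1]
    rcases sq_eq_sq_iff_eq_or_eq_neg.mp (h2.trans h3.symm) with h | h <;> rw [h] <;> simp
  · simp only [zz, if_true]; linarith
  · simp only [zz, if_true]; linarith

end Steenrod

namespace Steenrod
open scoped unitInterval Topology Topology.Homotopy
open GenLoop

variable {n : ℕ}

/-! ### The field on the cube of dimension `n + 1` -/

/-- Forget the first coordinate. -/
def tl (y : Fin (n+1) → ℝ) : Fin n → ℝ := fun i => y i.succ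

/-- The field on the cube of dimension `n + 1`. -/
noncomputable def WF (i0 : Fin n) (y : Fin (n+1) → ℝ) : ℝ × (Fin (n+1) → ℝ) :=
  (bb (tl y) * (y 0 * (1 - y 0)),
    (1 - y 0) • (Fin.cons (XF i0 (tl y)).1 (XF i0 (tl y)).2 : Fin (n+1) → ℝ) +
      y 0 • (Pi.single i0.succ 1 : Fin (n+1) → ℝ))

theorem tl_diff : Differentiable ℝ (tl (n := n)) := by
  unfold tl
  fun_prop

theorem tl_mem {y : Fin (n+1) → ℝ} (hy : y ∈ Q (n+1)) : tl y ∈ Q n := fun i => hy i.succ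

theorem bdy_cases {y : Fin (n+1) → ℝ} (hy : y ∈ bdy (n+1)) : y 0 = 0 ∨ y 0 = 1 ∨ tl y ∈ bdy n := by
  obtain ⟨i, hi⟩ := hy
  revert hi
  refine Fin.cases (fun hi => ?_) (fun i hi => ?_) i
  · tauto
  · exact Or.inr (Or.inr ⟨i, hi⟩)

theorem WF_zeroth (i0 : Fin n) (y : Fin (n+1) → ℝ) :
    (WF i0 y).2 0 = ((1 - y 0) * bb (tl y)) * (2 * y i0.succ - 1) := by
  simp [WF, XF, tl, Fin.succ_ne_zero]
  ring

theorem WF_same (i0 : Fin n) (y : Fin (n+1) → ℝ) :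
    (WF i0 y).2 i0.succ = (1 - y 0) * ss (tl y) + (3 / 2 * y 0 - 1 / 2) := by
  simp [WF, XF]
  ring

theorem WF_other {i0 i : Fin n} (h : i ≠ i0) (y : Fin (n+1) → ℝ) :
    (WF i0 y).2 i.succ = ((1 - y 0) * bb (tl y)) * (2 * y i.succ - 1) := by
  simp [WF, XF, h, tl]
  ring

theorem WF_diff (i0 : Fin n) : Differentiable ℝ (WF i0) := by
  have h1 := (bb_diff (n := n)).comp tl_diff
  have h2 := (ss_diff (n := n)).comp tl_diff
  have h1 : Differentiable ℝ fun y : Fin (n+1) → ℝ => bb (tl y) := h1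
  have h2 : Differentiable ℝ fun y : Fin (n+1) → ℝ => ss (tl y) := h2
  have h3 : Differentiable ℝ fun y => (WF i0 y).1 := by
    unfold WF
    fun_prop
  have h4 : Differentiable ℝ fun y => (WF i0 y).2 := by
    rw [differentiable_pi]
    intro i
    refine Fin.cases ?_ (fun i => ?_) i
    · simp only [WF_zeroth]; fun_prop
    · by_cases hi : i = i0
      · subst hi
        simp only [WF_same]; fun_prop
      · simp only [WF_other hi]; fun_prop
  exact h3.prodMk h4

theorem WF_bdy_pos (i0 : Fin n) {y : Fin (n+1) → ℝ} (hy : y ∈ Q (n+1)) (hb : tl y ∈ bdy n) :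
    0 < (WF i0 y).2 i0.succ := by
  rw [WF_same]
  have h1 := ss_bdy hb
  have h2 := hy 0
  nlinarith [h2.1, h2.2]

theorem WF_fld (i0 : Fin n) : Fld (WF i0) where
  diff := WF_diff i0
  ne y hy h := by
    by_cases hb : y ∈ bdy (n+1)
    · rcases bdy_cases hb with h0 | h0 | h0
      · apply (XF_fld i0).ne (tl y) (tl_mem hy)
        have h2 : (WF i0 y).2 = 0 := by rw [h]; rfl
        simp only [WF, h0, sub_zero, one_smul, zero_smul, add_zero] at h2
        exact Prod.ext (congrFun h2 0) (funext fun i => congrFun h2 i.succ)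
      · have h2 : (WF i0 y).2 i0.succ = 0 := by rw [h]; rfl
        rw [WF_same, h0] at h2
        norm_num at h2
      · have := WF_bdy_pos i0 hy h0
        rw [h] at this
        exact lt_irrefl _ this
    · have hq := Q_not_bdy hy hb
      have h1 : bb (tl y) * (y 0 * (1 - y 0)) = 0 := congrArg Prod.fst h
      have h2 := bb_pos (s := tl y) (fun i => hq i.succ)
      have h3 := mul_pos (hq 0).1 (sub_pos.mpr (hq 0).2)
      exact (mul_pos h2 h3).ne' h1
  bd y hy hb := by
    change bb (tl y) * (y 0 * (1 - y 0)) = 0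
    rcases bdy_cases hb with h0 | h0 | h0
    · rw [h0]; ring
    · rw [h0]; ring
    · rw [bb_bdy h0]; ring

/-- The zero of the field. -/
noncomputable def zW (n : ℕ) : Fin (n+1) → ℝ := Fin.cons (1 / 3) fun _ => 1 / 2

theorem zW_mem : zW n ∈ Qi (n+1) := by
  intro i
  refine Fin.cases ?_ (fun i => ?_) i <;> simp [zW] <;> norm_num

theorem WF_zero (i0 : Fin n) {y : Fin (n+1) → ℝ} (hy : y ∈ Q (n+1)) (h : (WF i0 y).2 = 0) :
    y = zW n := by
  have hb : tl y ∉ bdy n := fun hb => by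
    have := WF_bdy_pos i0 hy hb
    rw [h] at this
    exact lt_irrefl _ this
  have hq := bb_pos (Q_not_bdy (tl_mem hy) hb)
  have e0 := congrFun h 0
  have e1 := congrFun h i0.succ
  have e2 : ∀ i, i ≠ i0 → _ := fun i (_ : i ≠ i0) => congrFun h i.succ
  have h1 : 1 - y 0 ≠ 0 := by
    intro h1
    rw [WF_same, h1] at e1
    have : y 0 = 1 := by linarith
    rw [this] at e1
    norm_num at e1
  have hne := mul_ne_zero h1 hq.ne'
  have hτ : ∀ i : Fin n, 2 * y i.succ - 1 = 0 := by
    intro i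
    by_cases hi : i = i0
    · rw [WF_zeroth] at e0
      rw [hi]
      exact (mul_eq_zero.mp e0).resolve_left hne
    · have := e2 i hi
      rw [WF_other hi] at this
      exact (mul_eq_zero.mp this).resolve_left hne
  have hss : ss (tl y) = 0 := by
    rw [ss_single (s := tl y) i0 (fun i _ => hτ i)]
    change (2 * y i0.succ - 1) ^ 2 = 0
    rw [hτ]; norm_num
  rw [WF_same, hss] at e1
  simp at e1
  funext i
  refine Fin.cases ?_ (fun i => ?_) i
  · simp [zW]; linarith
  · have := hτ i
    simp [zW]; linarith

theorem zW_zero (i0 : Fin n) : (WF i0 (zW n)).2 = 0 := by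
  have hτ : ∀ i : Fin n, 2 * zW n i.succ - 1 = 0 := fun i => by simp [zW]
  have hss : ss (tl (zW n)) = 0 := by
    rw [ss_single (s := tl (zW n)) i0 (fun i _ => hτ i)]
    change (2 * zW n i0.succ - 1) ^ 2 = 0
    rw [hτ]; norm_num
  funext i
  refine Fin.cases ?_ (fun i => ?_) i
  · rw [WF_zeroth, hτ]; simp
  · by_cases hi : i = i0
    · rw [hi, WF_same, hss]; simp [zW]; norm_num
    · rw [WF_other hi, hτ]; simp

theorem WF_deriv (i0 : Fin n) : ∃ D : (Fin (n+1) → ℝ) →L[ℝ] (Fin (n+1) → ℝ),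
    HasFDerivAt (fun y => (WF i0 y).2) D (zW n) ∧ Function.Injective D := by
  let c : ℝ := (1 - zW n 0) * bb (tl (zW n))
  have hc : c ≠ 0 := by
    have h1 := bb_pos (s := tl (zW n)) (fun i => zW_mem i.succ)
    have h2 := sub_pos.mpr (zW_mem (n := n) 0).2
    exact (mul_pos h2 h1).ne'
  let D : Fin (n+1) → ((Fin (n+1) → ℝ) →L[ℝ] ℝ) :=
    Fin.cons (c • (2:ℝ) • ContinuousLinearMap.proj i0.succ)
      (fun i => if i = i0 then (3 / 2 : ℝ) • ContinuousLinearMap.proj 0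
        else c • (2:ℝ) • ContinuousLinearMap.proj i.succ)
  have hτ : ∀ i : Fin n, 2 * zW n i.succ - 1 = 0 := fun i => by simp [zW]
  have hu : DifferentiableAt ℝ (fun y : Fin (n+1) → ℝ => (1 - y 0) * bb (tl y)) (zW n) := by
    have h1 : Differentiable ℝ fun y : Fin (n+1) → ℝ => bb (tl y) :=
      (bb_diff (n := n)).comp tl_diff
    fun_prop
  have hss : ss (tl (zW n)) = 0 := by
    rw [ss_single (s := tl (zW n)) i0 (fun i _ => hτ i)]
    change (2 * zW n i0.succ - 1) ^ 2 = 0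
    rw [hτ]; norm_num
  refine ⟨ContinuousLinearMap.pi D, ?_, ?_⟩
  · rw [hasFDerivAt_pi]
    intro i
    refine Fin.cases ?_ (fun i => ?_) i
    · simp only [WF_zeroth]
      exact mul_deriv hu (tau_deriv i0.succ _) (hτ i0)
    · by_cases hi : i = i0
      · subst hi
        simp only [WF_same]
        have h1 := (ss_deriv (s := tl (zW n)) i (fun i _ => hτ i)).comp (zW n)
          (tl_diff (zW n)).hasFDerivAt
        have h2 : 2 * tl (zW n) i - 1 = 0 := hτ i
        rw [h2] at h1
        have h3 := mul_deriv (u := fun y : Fin (n+1) → ℝ => 1 - y 0) (by fun_prop) h1 hss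
        have h4 : HasFDerivAt (fun y : Fin (n+1) → ℝ => y 0)
          (ContinuousLinearMap.proj 0 : (Fin (n+1) → ℝ) →L[ℝ] ℝ) (zW n) := hasFDerivAt_apply 0 _
        refine (h3.add ((h4.const_mul (3/2)).sub_const (1/2))).congr_fderiv ?_
        ext v
        simp [D]
      · simp only [WF_other hi]
        refine (mul_deriv hu (tau_deriv i.succ _) (hτ i)).congr_fderiv ?_
        simp [D, hi, c]
  · rw [injective_iff_map_eq_zero]
    intro v hv
    have hv' : ∀ i, D i v = 0 := fun i => congrFun hv i
    funext i
    refine Fin.cases ?_ (fun i => ?_) i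
    · have := hv' i0.succ
      simpa [D] using this
    · by_cases hi : i = i0
      · have := hv' 0
        rw [hi]
        simpa [D, hc] using this
      · have := hv' i.succ
        simpa [D, hc, hi] using this

theorem WF_nice (i0 : Fin n) : Nice (quad (WF i0)) := by
  refine (WF_fld i0).nice ?_ ?_
  · refine Set.Finite.subset (Set.finite_singleton (zW n)) ?_
    rintro x ⟨h1, h2⟩
    exact WF_zero i0 h1 h2
  · intro z hz h
    rw [WF_zero i0 hz h]
    exact WF_deriv i0

theorem WF_gen (i0 : Fin n) {a : HomotopyGroup (Fin (n+1)) (S (n+1)) (e0 (n+1))}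
    (ha : Cls (quad (WF i0)) a) : Subgroup.zpowers a = ⊤ := by
  obtain ⟨ι, hι⟩ := Lin_cls (n+1)
  have htop := zpowers_eq_top hι
  have hN := WF_nice i0
  have hz : zW n ∈ Zs (quad (WF i0)) := (WF_fld i0).zs.mpr ⟨Qi_sub_Q zW_mem, zW_zero i0⟩
  obtain ⟨D, hD, hinj⟩ := hN.nd _ hz
  let A := LinearMap.toMatrix' (D : (Fin (n+1) → ℝ) →ₗ[ℝ] (Fin (n+1) → ℝ))
  have hA : ∀ v, D v = A *ᵥ v := fun v => by
    rw [← Matrix.toLin'_apply, Matrix.toLin'_toMatrix']; rfl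
  have hdet : A.det ≠ 0 := by
    intro h
    obtain ⟨v, hv, hv0⟩ := Matrix.exists_mulVec_eq_zero_iff.mpr h
    rw [← hA] at hv0
    exact hv (hinj (by rw [hv0, map_zero]))
  have hu : ∀ x ∈ Zs (quad (WF i0)), x = zW n := by
    intro x hx
    obtain ⟨h1, h2⟩ := (WF_fld i0).zs.mp hx
    exact WF_zero i0 h1 h2
  have hs := fun {a} (ha : Cls (Lin A (zW n)) a) =>
        single_zero hN.adm zW_mem (hN.pos hu) hz.2.1 hz.2.2 hD hA hdet ha
  rcases lt_or_gt_of_ne hdet with h | h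
  · rw [ha.unique (hs ((hι A _ zW_mem).2 h)), Subgroup.zpowers_inv, htop]
  · rw [ha.unique (hs ((hι A _ zW_mem).1 h)), htop]

end Steenrod

namespace Steenrod
open scoped unitInterval Topology Topology.Homotopy
open GenLoop
variable {n : ℕ}

/-! ### Block matrices and rotations -/

/-- The special orthogonal group of size `n + 1`. -/
abbrev SOg (n : ℕ) := Matrix.specialOrthogonalGroup (Fin (n+1)) ℝ

/-- The block inclusion. -/
def blk (A : Matrix (Fin n) (Fin n) ℝ) : Matrix (Fin (n+1)) (Fin (n+1)) ℝ := fun i j' =>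
  if hi : i = 0 then (if j' = 0 then (1:ℝ) else 0)
  else if hj' : j' = 0 then (0:ℝ) else A (i.pred hi) (j'.pred hj')

theorem blk_mulVec (A : Matrix (Fin n) (Fin n) ℝ) (a : ℝ) (v : Fin n → ℝ) :
    blk A *ᵥ (Fin.cons a v : Fin (n+1) → ℝ) = Fin.cons a (A *ᵥ v) := by
  funext i
  refine Fin.cases ?_ (fun i => ?_) i
  · simp [Matrix.mulVec, dotProduct, Fin.sum_univ_succ, blk]
  · simp [Matrix.mulVec, dotProduct, Fin.sum_univ_succ, blk]

theorem ext_cons {A B : Matrix (Fin (n+1)) (Fin (n+1)) ℝ}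
    (h : ∀ (a : ℝ) (v : Fin n → ℝ), A *ᵥ (Fin.cons a v : Fin (n+1) → ℝ) = B *ᵥ (Fin.cons a v : Fin (n+1) → ℝ)) :
    A = B := by
  apply Matrix.toLin'.injective
  ext1 i
  ext1
  have := h ((Pi.single i 1 : Fin (n+1) → ℝ) 0) (Fin.tail (Pi.single i 1 : Fin (n+1) → ℝ))
  rw [Fin.cons_self_tail] at this
  simpa using this

theorem blk_mul (A B : Matrix (Fin n) (Fin n) ℝ) : blk (A * B) = blk A * blk B := by
  apply ext_cons
  intro a v
  rw [← Matrix.mulVec_mulVec, blk_mulVec, blk_mulVec, blk_mulVec, Matrix.mulVec_mulVec]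

theorem blk_one : blk (1 : Matrix (Fin n) (Fin n) ℝ) = 1 := by
  apply ext_cons
  intro a v
  rw [blk_mulVec, Matrix.one_mulVec, Matrix.one_mulVec]

theorem blk_inj {A B : Matrix (Fin n) (Fin n) ℝ} (h : blk A = blk B) : A = B := by
  ext i k
  have := congrFun (congrFun h i.succ) k.succ
  simpa [blk] using this

theorem blk_det (A : Matrix (Fin n) (Fin n) ℝ) : (blk A).det = A.det := by
  rw [Matrix.det_succ_row_zero, Finset.sum_eq_single 0]
  · have : (blk A).submatrix Fin.succ (Fin.succAbove 0) = A := by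
      ext i k
      simp [blk]
    rw [this]
    simp [blk]
  · intro b _ hb
    simp [blk, hb]
  · simp

theorem blk_transpose (A : Matrix (Fin n) (Fin n) ℝ) : (blk A)ᵀ = blk Aᵀ := by
  ext i k
  refine Fin.cases ?_ (fun i => ?_) i <;> refine Fin.cases ?_ (fun k => ?_) k <;>
    simp [blk]

theorem dot_cons (a b : ℝ) (u v : Fin n → ℝ) :
    (Fin.cons a u : Fin (n+1) → ℝ) ⬝ᵥ (Fin.cons b v : Fin (n+1) → ℝ) = a * b + u ⬝ᵥ v := by
  simp [dotProduct, Fin.sum_univ_succ]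

theorem refl_cons (u : Fin n → ℝ) : refl (Fin.cons 0 u : Fin (n+1) → ℝ) = blk (refl u) := by
  apply ext_cons
  intro a v
  rw [blk_mulVec, refl_mulVec, refl_mulVec, dot_cons, dot_cons]
  funext i
  refine Fin.cases ?_ (fun i => ?_) i <;> simp

theorem refl_smul {m : Type*} [Fintype m] [DecidableEq m] {c : ℝ} (hc : c ≠ 0) (u : m → ℝ) :
    refl (c • u) = refl u := by
  by_cases hu : u = 0
  · simp [hu]
  have := dot_self_ne hu
  unfold refl
  rw [smul_dotProduct, dotProduct_smul, Matrix.smul_vecMulVec, Matrix.vecMulVec_smul]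
  congr 1
  simp only [smul_smul, smul_eq_mul]
  congr 1
  field_simp

theorem mem_SO {M : Matrix (Fin n) (Fin n) ℝ} (h : M * Mᵀ = 1) (hd : M.det = 1) :
    M ∈ Matrix.specialOrthogonalGroup (Fin n) ℝ := by
  rw [Matrix.mem_specialOrthogonalGroup_iff]
  exact ⟨(Matrix.mem_orthogonalGroup_iff (Fin n) ℝ).mpr h, hd⟩

theorem SO_mul_transpose (A : SOg n) : A.1 * A.1ᵀ = 1 :=
  (Matrix.mem_orthogonalGroup_iff (Fin (n+1)) ℝ).mp (Matrix.mem_specialOrthogonalGroup_iff.mp A.2).1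

theorem SO_transpose_mul (A : SOg n) : A.1ᵀ * A.1 = 1 :=
  (Matrix.mem_orthogonalGroup_iff' (Fin (n+1)) ℝ).mp (Matrix.mem_specialOrthogonalGroup_iff.mp A.2).1

theorem SO_det (A : SOg n) : A.1.det = 1 := (Matrix.mem_specialOrthogonalGroup_iff.mp A.2).2

theorem SO_inv (A : SOg n) : (A⁻¹).1 = A.1ᵀ := rfl

/-- A product of two reflections. -/
noncomputable def rot (v w : Fin (n+1) → ℝ) (hv : v ≠ 0) (hw : w ≠ 0) : SOg n :=
  ⟨refl v * refl w, mem_SO (by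
    rw [Matrix.transpose_mul, refl_transpose, refl_transpose, Matrix.mul_assoc,
      ← Matrix.mul_assoc (refl w), refl_mul_self (dot_self_ne hw), Matrix.one_mul,
      refl_mul_self (dot_self_ne hv)])
    (by rw [Matrix.det_mul, det_refl (dot_self_ne hv), det_refl (dot_self_ne hw)]; norm_num)⟩

theorem continuous_rot {T : Type*} [TopologicalSpace T] {v w : T → Fin (n+1) → ℝ}
    (hv : Continuous v) (hw : Continuous w) (h1 : ∀ t, v t ≠ 0) (h2 : ∀ t, w t ≠ 0) :
    Continuous fun t => rot (v t) (w t) (h1 t) (h2 t) := by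
  refine Continuous.subtype_mk ?_ _
  exact (continuous_refl hv fun t => dot_self_ne (h1 t)).matrix_mul
    (continuous_refl hw fun t => dot_self_ne (h2 t))

theorem rot_eq_one {v w : Fin (n+1) → ℝ} (hv : v ≠ 0) (hw : w ≠ 0) {c : ℝ} (hc : c ≠ 0)
    (h : v = c • w) : rot v w hv hw = 1 := by
  apply Subtype.ext
  change refl v * refl w = 1
  rw [h, refl_smul hc, refl_mul_self (dot_self_ne hw)]

theorem refl_fix {m : Type*} [Fintype m] [DecidableEq m] {u v : m → ℝ} (h : u ⬝ᵥ v = 0) :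
    refl u *ᵥ v = v := by
  rw [refl_mulVec, h]; simp

/-- A matrix in the special orthogonal group fixing the base vector is a block matrix. -/
theorem exists_blk (k : SOg (n+1)) (h : k.1 *ᵥ Pi.single 0 1 = Pi.single 0 1) :
    ∃ B : SOg n, k.1 = blk B.1 := by
  have h' : k.1ᵀ *ᵥ Pi.single 0 1 = Pi.single 0 1 := by
    conv_lhs => rw [← h]
    rw [Matrix.mulVec_mulVec, SO_transpose_mul, Matrix.one_mulVec]
  rw [Matrix.mulVec_single_one] at h h'
  have e : k.1 = blk (k.1.submatrix Fin.succ Fin.succ) := by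
    ext i l
    refine Fin.cases ?_ (fun i => ?_) i
    · have := congrFun h' l
      simp only [Matrix.col_apply, Matrix.transpose_apply] at this
      rw [this]
      refine Fin.cases ?_ (fun l => ?_) l <;> simp [blk]
    · refine Fin.cases ?_ (fun l => ?_) l
      · have := congrFun h i.succ
        simp only [Matrix.col_apply] at this
        rw [this]
        simp [blk]
      · simp [blk]
  refine ⟨⟨k.1.submatrix Fin.succ Fin.succ, mem_SO ?_ ?_⟩, e⟩
  · apply blk_inj
    rw [blk_mul, ← blk_transpose, ← e, blk_one, SO_mul_transpose]
  · rw [← blk_det, ← e, SO_det]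

end Steenrod

namespace Steenrod
open scoped unitInterval Topology Topology.Homotopy
open GenLoop
variable {n : ℕ}

/-! ### The fibration -/

/-- Tail of a point of the cube. -/
def tlI (y : I^(Fin (n+1))) : I^(Fin n) := fun i => y i.succ

theorem continuous_tlI : Continuous (tlI (n := n)) := by unfold tlI; fun_prop

theorem bdyI_cases {y : I^(Fin (n+1))} (hy : y ∈ Cube.boundary (Fin (n+1))) :
    y 0 = 0 ∨ (y 0 = 1 ∨ tlI y ∈ Cube.boundary (Fin n)) := by
  obtain ⟨i, hi⟩ := hy
  revert hi
  refine Fin.cases (fun hi => ?_) (fun i hi => ?_) i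
  · tauto
  · exact Or.inr (Or.inr ⟨i, hi⟩)

theorem bdyI_of_tl {y : I^(Fin (n+1))} (hy : tlI y ∈ Cube.boundary (Fin n)) :
    y ∈ Cube.boundary (Fin (n+1)) := by
  obtain ⟨i, hi⟩ := hy
  exact ⟨i.succ, hi⟩

/-- One step of the lifting procedure. -/
theorem lift_step {T : Type*} [TopologicalSpace T] {q : C(SOg n, S n)}
    (hq : ∀ A, ((q A : EuclideanSpace ℝ (Fin (n+1))) : Fin (n+1) → ℝ) = A.1 *ᵥ Pi.single 0 1)
    {h : T → SOg n} (hh : Continuous h) {g : T → S n} (hg : Continuous g)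
    (hne : ∀ t, dist (q (h t)) (g t) < 2) :
    ∃ h' : T → SOg n, Continuous h' ∧ (∀ t, q (h' t) = g t) ∧
      (∀ t, g t = q (h t) → h' t = h t) := by
  let u : T → Fin (n+1) → ℝ := fun t => (q (h t) : EuclideanSpace ℝ (Fin (n+1))).ofLp
  let w : T → Fin (n+1) → ℝ := fun t => (g t : EuclideanSpace ℝ (Fin (n+1))).ofLp
  have hu : Continuous u := by
    have : Continuous fun t => (q (h t) : EuclideanSpace ℝ (Fin (n+1))) := by fun_prop
    fun_prop
  have hw : Continuous w := by
    have : Continuous fun t => (g t : EuclideanSpace ℝ (Fin (n+1))) := by fun_prop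
    fun_prop
  have unit : ∀ x : S n, (x : EuclideanSpace ℝ (Fin (n+1))).ofLp ⬝ᵥ (x : EuclideanSpace ℝ (Fin (n+1))).ofLp = 1 := by
    intro x
    have h1 : ‖(x : EuclideanSpace ℝ (Fin (n+1)))‖ = 1 := by simpa using x.2
    have h2 := EuclideanSpace.real_norm_sq_eq (x : EuclideanSpace ℝ (Fin (n+1)))
    rw [h1] at h2
    simp only [dotProduct]
    rw [show (1:ℝ) = 1 ^ 2 by norm_num, h2]
    exact Finset.sum_congr rfl fun i _ => (pow_two _).symm
  have hu1 : ∀ t, u t ⬝ᵥ u t = 1 := fun t => unit _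
  have hw1 : ∀ t, w t ⬝ᵥ w t = 1 := fun t => unit _
  have hu0 : ∀ t, u t ≠ 0 := fun t e => by
    have := hu1 t; rw [e] at this; simp at this
  have hs0 : ∀ t, u t + w t ≠ 0 := fun t e => by
    have h1 : (q (h t) : EuclideanSpace ℝ (Fin (n+1))) = - (g t : EuclideanSpace ℝ (Fin (n+1))) := by
      ext i
      have := congrFun e i
      simp only [u, w, Pi.add_apply, Pi.zero_apply] at this
      simp only [PiLp.neg_apply]
      linarith
    have h2 := hne t
    rw [Subtype.dist_eq, dist_eq_norm, h1, ← neg_add', norm_neg, ← two_smul ℝ, norm_smul] at h2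
    have h3 : ‖(g t : EuclideanSpace ℝ (Fin (n+1)))‖ = 1 := by simp
    rw [h3] at h2
    norm_num at h2
  refine ⟨fun t => rot (u t + w t) (u t) (hs0 t) (hu0 t) * h t, ?_, ?_, ?_⟩
  · exact (continuous_rot (hu.add hw) hu hs0 hu0).mul hh
  · intro t
    apply Subtype.ext
    apply WithLp.ofLp_injective
    rw [hq]
    change (refl (u t + w t) * refl (u t) * (h t).1) *ᵥ _ = w t
    rw [← Matrix.mulVec_mulVec, ← hq]
    change _ *ᵥ u t = _
    have e1 : refl (u t) *ᵥ u t = - u t := by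
      rw [refl_mulVec, hu1]
      funext i; simp; ring
    have d1 : (u t + w t) ⬝ᵥ (u t + w t) ≠ 0 := dot_self_ne (hs0 t)
    have d2 : 2 * ((u t + w t) ⬝ᵥ u t) = (u t + w t) ⬝ᵥ (u t + w t) := by
      simp only [add_dotProduct, dotProduct_add, hu1, hw1, dotProduct_comm (w t) (u t)]
      ring
    rw [← Matrix.mulVec_mulVec, e1, Matrix.mulVec_neg, refl_mulVec, d2, div_self d1]
    funext i; simp
  · intro t ht
    have : w t = u t := by simp only [w, u, ht]
    have e := rot_eq_one (hs0 t) (hu0 t) (c := 2) two_ne_zero (by rw [this, two_smul])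
    change rot (u t + w t) (u t) (hs0 t) (hu0 t) * h t = h t
    rw [e, one_mul]

/-- Lifting of homotopies. -/
theorem lift_homotopy {T : Type*} [TopologicalSpace T] [CompactSpace T] {q : C(SOg n, S n)}
    (hq : ∀ A, ((q A : EuclideanSpace ℝ (Fin (n+1))) : Fin (n+1) → ℝ) = A.1 *ᵥ Pi.single 0 1)
    {h : T → SOg n} (hh : Continuous h) (K : I × T → S n) (hK : Continuous K)
    (h0 : ∀ t, K (0, t) = q (h t)) :
    ∃ h' : T → SOg n, Continuous h' ∧ (∀ t, q (h' t) = K (1, t)) ∧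
      (∀ t, (∀ s, K (s, t) = K (0, t)) → h' t = h t) := by
  let c : C(I, C(T, S n)) := ContinuousMap.curry ⟨K, hK⟩
  have hc : UniformContinuous c := CompactSpace.uniformContinuous_of_continuous c.continuous
  obtain ⟨ε, hε, hc⟩ := Metric.uniformContinuous_iff.mp hc 2 two_pos
  obtain ⟨N, hN⟩ := exists_nat_one_div_lt hε
  let pt : ℕ → I := fun k => Set.projIcc 0 1 zero_le_one ((k : ℝ) / (N + 1))
  have hpt : ∀ k, dist (pt k) (pt (k+1)) < ε := by
    intro k
    refine lt_of_le_of_lt ?_ hN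
    rw [Subtype.dist_eq]
    simp only [pt]
    have := (LipschitzWith.projIcc (zero_le_one (α := ℝ))).dist_le_mul ((k : ℝ) / (N + 1)) (((k + 1 : ℕ) : ℝ) / (N + 1))
    rw [Subtype.dist_eq] at this
    refine this.trans (le_of_eq ?_)
    rw [Real.dist_eq, ← sub_div]
    push_cast
    rw [show (k : ℝ) - (k + 1) = -1 by ring, neg_div, abs_neg, abs_of_pos (by positivity)]
    simp
  have key : ∀ k : ℕ, ∃ h' : T → SOg n, Continuous h' ∧ (∀ t, q (h' t) = K (pt k, t)) ∧
      (∀ t, (∀ s, K (s, t) = K (0, t)) → h' t = h t) := by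
    intro k
    induction k with
    | zero =>
      refine ⟨h, hh, fun t => ?_, fun _ _ => rfl⟩
      have : pt 0 = 0 := by simp [pt]
      rw [this, h0]
    | succ k ih =>
      obtain ⟨h1, c1, q1, b1⟩ := ih
      obtain ⟨h2, c2, q2, b2⟩ := lift_step hq c1 (g := fun t => K (pt (k+1), t)) (by fun_prop) (fun t => by
        rw [q1]
        refine lt_of_le_of_lt ?_ (hc (hpt k))
        exact ContinuousMap.dist_apply_le_dist (f := c (pt k)) (g := c (pt (k+1))) t)
      refine ⟨h2, c2, q2, fun t ht => ?_⟩
      rw [b2 t, b1 t ht]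
      rw [q1, ht, ht (pt k)]
  obtain ⟨h', a1, a2, a3⟩ := key (N + 1)
  refine ⟨h', a1, fun t => ?_, a3⟩
  have : pt (N + 1) = 1 := by
    simp only [pt]
    push_cast
    rw [div_self (by positivity)]
    simp
  rw [a2, this]

section fib
variable (q : C(SOg (n+1), S (n+1))) (j : C(SOg n, SOg (n+1)))

/-- `h` is a partial lift, of the map `f`, with face `z`. -/
structure Lift (h : (I^(Fin (n+1))) → SOg (n+1)) (z : Ω^ (Fin n) (SOg n) 1)
    (f : Ω^ (Fin (n+1)) (S (n+1)) (q (j 1))) : Prop where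
  cont : Continuous h
  face : ∀ y, y 0 = 0 → h y = j (z (tlI y))
  rest : ∀ y, (y 0 = 1 ∨ tlI y ∈ Cube.boundary (Fin n)) → h y = 1
  proj : ∀ y, f y = q (h y)

/-- The boundary relation. -/
def Rel (a : HomotopyGroup (Fin (n+1)) (S (n+1)) (q (j 1))) (b : HomotopyGroup (Fin n) (SOg n) 1) :
    Prop := ∃ h z f, Lift q j h z f ∧ cl f = a ∧ cl z = b

variable {q j}
variable (hq : ∀ A, ((q A : EuclideanSpace ℝ (Fin (n+1+1))) : Fin (n+1+1) → ℝ) = A.1 *ᵥ Pi.single 0 1)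
  (hj : ∀ A, (j A).1 = blk A.1)

theorem j_one (hj : ∀ A, (j A).1 = blk A.1) : j 1 = 1 := by
  apply Subtype.ext
  rw [hj]
  exact blk_one

theorem q_j (hq : ∀ A, ((q A : EuclideanSpace ℝ (Fin (n+1+1))) : Fin (n+1+1) → ℝ) = A.1 *ᵥ Pi.single 0 1)
    (hj : ∀ A, (j A).1 = blk A.1) (A : SOg n) : q (j A) = e0 (n+1) := by
  apply Subtype.ext
  apply WithLp.ofLp_injective
  rw [hq, hj]
  have : (Pi.single 0 1 : Fin (n+1+1) → ℝ) = Fin.cons 1 0 := by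
    funext i
    refine Fin.cases ?_ (fun i => ?_) i <;> simp
  have h2 : ((e0 (n+1) : EuclideanSpace ℝ (Fin (n+1+1))) : Fin (n+1+1) → ℝ) = Pi.single 0 1 := by
    simp [e0]
  rw [h2, this, blk_mulVec]
  simp

theorem Rel.exists_of_ker [Nonempty (Fin n)] (hq : ∀ A, ((q A : EuclideanSpace ℝ (Fin (n+1+1))) : Fin (n+1+1) → ℝ) = A.1 *ᵥ Pi.single 0 1)
    (hj : ∀ A, (j A).1 = blk A.1) {z : HomotopyGroup (Fin n) (SOg n) 1}
    (h : piMap j z = 1) : ∃ y, Rel q j y z := by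
  obtain ⟨z, rfl⟩ := cl_surj z
  rw [piMap_cl', one_eq_cl] at h
  obtain ⟨H, c, h0, h1, hb⟩ := homotopy_of_cl_eq h
  have hb1 : ∀ y : I^(Fin (n+1)), (y 0 = 1 ∨ tlI y ∈ Cube.boundary (Fin n)) → H (y 0, tlI y) = 1 := by
    rintro y (e | e)
    · rw [e, h1]; exact j_one hj
    · rw [hb _ _ e]; exact j_one hj
  have hb0 : ∀ y : I^(Fin (n+1)), y 0 = 0 → H (y 0, tlI y) = j (z (tlI y)) := by
    intro y e
    rw [e, h0, postc_apply]
  have cc : Continuous fun y : I^(Fin (n+1)) => H (y 0, tlI y) :=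
    c.comp ((continuous_apply 0).prodMk continuous_tlI)
  refine ⟨cl ⟨⟨fun y => q (H (y 0, tlI y)), (map_continuous q).comp cc⟩, ?_⟩, fun y => H (y 0, tlI y), z, _, ⟨cc, hb0, hb1, fun y => rfl⟩, rfl, rfl⟩
  intro y hy
  change q (H (y 0, tlI y)) = _
  rcases bdyI_cases hy with e | e
  · rw [hb0 y e, q_j hq hj, q_j hq hj]
  · rw [hb1 y e, j_one hj]

theorem tlI_update (y : I^(Fin (n+1))) (i : Fin n) (a : I) :
    tlI (Function.update y i.succ a) = Function.update (tlI y) i a := by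
  funext k
  by_cases hk : k = i
  · subst hk; simp [tlI]
  · simp [tlI, hk]

theorem Rel.mul [Nonempty (Fin n)] {a a' b b'} (h1 : Rel q j a b) (h2 : Rel q j a' b') :
    Rel q j (a * a') (b * b') := by
  obtain ⟨h', z', f', L', rfl, rfl⟩ := h1
  obtain ⟨h, z, f, L, rfl, rfl⟩ := h2
  let i : Fin n := Classical.arbitrary _
  refine ⟨fun y => if (y i.succ : ℝ) ≤ 1 / 2
      then h (Function.update y i.succ <| Set.projIcc 0 1 zero_le_one (2 * y i.succ))
      else h' (Function.update y i.succ <| Set.projIcc 0 1 zero_le_one (2 * y i.succ - 1)),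
    transAt i z z', transAt i.succ f f', ⟨?_, ?_, ?_, ?_⟩, (cl_mul _ _ _).symm, (cl_mul _ _ _).symm⟩
  · refine Continuous.if_le ?_ ?_ (by fun_prop) (by fun_prop) ?_
    · refine L.cont.comp (Continuous.update continuous_id _ (continuous_projIcc.comp (by fun_prop)))
    · refine L'.cont.comp (Continuous.update continuous_id _ (continuous_projIcc.comp (by fun_prop)))
    · intro y hy
      rw [L.rest, L'.rest]
      · right
        rw [tlI_update]
        refine ⟨i, Or.inl ?_⟩
        rw [hy]; simp
      · right
        rw [tlI_update]
        refine ⟨i, Or.inr ?_⟩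
        rw [hy]; simp
  · intro y hy
    rw [transAt_apply]
    have : ∀ x, (Function.update y i.succ x) 0 = 0 := fun x => by
      rw [Function.update_of_ne (Fin.succ_ne_zero i).symm, hy]
    simp only [L.face _ (this _), L'.face _ (this _), tlI_update]
    change _ = j (if ((y i.succ : I) : ℝ) ≤ 1/2 then _ else _)
    split_ifs <;> rfl
  · intro y hy
    have key : ∀ x, ((Function.update y i.succ x) 0 = 1 ∨ tlI (Function.update y i.succ x) ∈ Cube.boundary (Fin n)) ∨
        (y i.succ = 0 ∨ y i.succ = 1) := by
      intro x
      rcases hy with hy | ⟨k, hk⟩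
      · left; left
        rw [Function.update_of_ne (Fin.succ_ne_zero i).symm, hy]
      · by_cases hki : k = i
        · subst hki; right; exact hk
        · left; right
          rw [tlI_update]
          exact ⟨k, by rw [Function.update_of_ne hki]; exact hk⟩
    split_ifs with hle
    · apply L.rest
      rcases key (Set.projIcc 0 1 zero_le_one (2 * y i.succ)) with h | h | h
      · exact h
      · right
        rw [tlI_update]
        refine ⟨i, Or.inl ?_⟩
        simp [h]
      · rw [h] at hle; norm_num at hle
    · apply L'.rest
      rcases key (Set.projIcc 0 1 zero_le_one (2 * y i.succ - 1)) with h | h | h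
      · exact h
      · rw [h] at hle; norm_num at hle
      · right
        rw [tlI_update]
        refine ⟨i, Or.inr ?_⟩
        rw [h]
        norm_num
  · intro y
    rw [transAt_apply, L.proj, L'.proj]
    split_ifs <;> rfl

theorem Rel.inv [Nonempty (Fin n)] {a b} (h1 : Rel q j a b) : Rel q j a⁻¹ b⁻¹ := by
  obtain ⟨h, z, f, L, rfl, rfl⟩ := h1
  let i : Fin n := Classical.arbitrary _
  refine ⟨fun y => h fun k => if k = i.succ then σ (y i.succ) else y k,
    symmAt i z, symmAt i.succ f, ⟨?_, ?_, ?_, ?_⟩, (cl_inv _ _).symm, (cl_inv _ _).symm⟩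
  · refine L.cont.comp (continuous_pi fun k => ?_)
    split_ifs <;> fun_prop
  · intro y hy
    rw [L.face _ (by rw [if_neg (Fin.succ_ne_zero i).symm, hy]), symmAt_apply]
    congr 2
    funext k
    simp [tlI]
  · intro y hy
    apply L.rest
    rcases hy with hy | ⟨k, hk⟩
    · left
      rw [if_neg (Fin.succ_ne_zero i).symm, hy]
    · right
      refine ⟨k, ?_⟩
      by_cases hki : k = i
      · subst hki
        change y i.succ = 0 ∨ y i.succ = 1 at hk
        rcases hk with hk | hk <;> simp [tlI, hk]
      · simp only [tlI, Fin.succ_inj, hki, if_false]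
        exact hk
  · intro y
    rw [symmAt_apply, L.proj]

theorem Rel.one [Nonempty (Fin n)] (hj : ∀ A, (j A).1 = blk A.1) : Rel q j 1 1 := by
  refine ⟨fun _ => 1, const, const, ⟨continuous_const, fun y hy => ?_, fun _ _ => rfl, fun y => ?_⟩, rfl, rfl⟩
  · exact (j_one hj).symm
  · change q (j 1) = q 1
    rw [j_one hj]

theorem Rel.zpow [Nonempty (Fin n)] (hj : ∀ A, (j A).1 = blk A.1) {a b} (h : Rel q j a b) (k : ℤ) :
    Rel q j (a ^ k) (b ^ k) := by
  have hN : ∀ k : ℕ, Rel q j (a ^ k) (b ^ k) := by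
    intro k
    induction k with
    | zero => simpa using Rel.one hj
    | succ k ih => rw [pow_succ, pow_succ]; exact ih.mul h
  rcases k with k | k
  · simpa using hN k
  · rw [zpow_negSucc, zpow_negSucc]; exact (hN _).inv

theorem Rel.unique [Nonempty (Fin n)] (hq : ∀ A, ((q A : EuclideanSpace ℝ (Fin (n+1+1))) : Fin (n+1+1) → ℝ) = A.1 *ᵥ Pi.single 0 1)
    (hj : ∀ A, (j A).1 = blk A.1) {a b b'} (h1 : Rel q j a b) (h2 : Rel q j a b') : b = b' := by
  obtain ⟨h, z, f, L, rfl, rfl⟩ := h1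
  obtain ⟨h', z', f', L', e, rfl⟩ := h2
  obtain ⟨K, cK, K0, K1, Kb⟩ := homotopy_of_cl_eq e.symm
  obtain ⟨g, cg, qg, bg⟩ := lift_homotopy hq L.cont K cK (fun t => by rw [K0, L.proj])
  have bg' : ∀ y ∈ Cube.boundary (Fin (n+1)), g y = h y := fun y hy =>
    bg y fun s => by rw [Kb _ _ hy, Kb _ _ hy]
  have fix : ∀ y, ((h' y)⁻¹ * g y).1 *ᵥ Pi.single 0 1 = Pi.single 0 1 := by
    intro y
    have e1 : q (g y) = q (h' y) := by rw [qg, K1, L'.proj]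
    have e2 : (g y).1 *ᵥ Pi.single 0 1 = (h' y).1 *ᵥ Pi.single 0 1 := by rw [← hq, ← hq, e1]
    change ((h' y).1ᵀ * (g y).1) *ᵥ _ = _
    rw [← Matrix.mulVec_mulVec, e2, Matrix.mulVec_mulVec, SO_transpose_mul, Matrix.one_mulVec]
  choose B hB using fun y => exists_blk _ (fix y)
  have cB : Continuous B := by
    refine continuous_induced_rng.mpr (continuous_matrix fun i k => ?_)
    have : ∀ y, (B y).1 i k = ((h' y)⁻¹ * g y).1 i.succ k.succ := fun y => by
      rw [hB]; simp [blk]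
    change Continuous fun y => (B y).1 i k
    simp only [this]
    have c1 : Continuous fun y => (h' y).1ᵀ * (g y).1 :=
      (continuous_subtype_val.comp L'.cont).matrix_transpose.matrix_mul (continuous_subtype_val.comp cg)
    exact c1.matrix_elem _ _
  have B1 : ∀ y, (y 0 = 1 ∨ tlI y ∈ Cube.boundary (Fin n)) → B y = 1 := by
    intro y hy
    apply Subtype.ext
    apply blk_inj
    have hyb : y ∈ Cube.boundary (Fin (n+1)) := by
      rcases hy with hy | hy
      · exact ⟨0, Or.inr hy⟩
      · exact bdyI_of_tl hy
    rw [← hB, bg' y hyb, L.rest y hy, L'.rest y hy]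
    change _ = blk 1
    rw [blk_one]; simp
  have B0 : ∀ y, y 0 = 0 → z' (tlI y) * B y = z (tlI y) := by
    intro y hy
    have hyb : y ∈ Cube.boundary (Fin (n+1)) := ⟨0, Or.inl hy⟩
    apply Subtype.ext
    apply blk_inj
    change blk ((z' (tlI y)).1 * (B y).1) = _
    rw [blk_mul, ← hB, bg' y hyb, ← hj, ← hj, ← L'.face y hy, ← L.face y hy]
    change (h' y * ((h' y)⁻¹ * h y)).1 = _
    rw [mul_inv_cancel_left]
  refine cl_eq_of_homotopy (fun w => z' w.2 * B (Fin.cons w.1 w.2 : Fin (n+1) → I)) ?_ ?_ ?_ ?_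
  · refine ((map_continuous z').comp continuous_snd).mul (cB.comp ?_)
    refine continuous_pi fun i => ?_
    refine Fin.cases ?_ (fun i => ?_) i
    · exact continuous_fst
    · simp only [Fin.cons_succ]; fun_prop
  · intro y
    exact B0 (Fin.cons 0 y : Fin (n+1) → I) rfl
  · intro y
    change z' y * B _ = _
    rw [B1 _ (Or.inl rfl), mul_one]
  · intro t y hy
    change z' y * B _ = _
    rw [B1 (Fin.cons t y : Fin (n+1) → I) (Or.inr hy), mul_one]
    exact z'.2 y hy

/-- If a generator is related to `b`, the kernel of `j_*` is contained in the group generated by `b`. -/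
theorem Rel.ker [Nonempty (Fin n)] (hq : ∀ A, ((q A : EuclideanSpace ℝ (Fin (n+1+1))) : Fin (n+1+1) → ℝ) = A.1 *ᵥ Pi.single 0 1)
    (hj : ∀ A, (j A).1 = blk A.1) {a b} (h : Rel q j a b) (ha : Subgroup.zpowers a = ⊤)
    {z} (hz : piMap j z = 1) : z ∈ Subgroup.zpowers b := by
  obtain ⟨y, hy⟩ := Rel.exists_of_ker hq hj hz
  have : y ∈ Subgroup.zpowers a := by rw [ha]; trivial
  obtain ⟨k, rfl⟩ := this
  exact ⟨k, (h.zpow hj k).unique hq hj hy⟩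

theorem Rel.mem_ker [Nonempty (Fin n)] (hj : ∀ A, (j A).1 = blk A.1) {a b} (h : Rel q j a b) : piMap j b = 1 := by
  obtain ⟨h, z, f, L, rfl, rfl⟩ := h
  rw [piMap_cl', one_eq_cl]
  refine cl_eq_of_homotopy (fun w => h (Fin.cons w.1 w.2 : Fin (n+1) → I)) ?_ ?_ ?_ ?_
  · refine L.cont.comp ?_
    refine continuous_pi fun i => ?_
    refine Fin.cases ?_ (fun i => ?_) i
    · exact continuous_fst
    · simp only [Fin.cons_succ]; fun_prop
  · intro y
    exact L.face (Fin.cons 0 y : Fin (n+1) → I) rfl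
  · intro y
    exact (L.rest (Fin.cons 1 y : Fin (n+1) → I) (Or.inl rfl)).trans (j_one hj).symm
  · intro t y hy
    exact (L.rest (Fin.cons t y : Fin (n+1) → I) (Or.inr hy)).trans (j_one hj).symm

end fib
end Steenrod

namespace Steenrod
open scoped unitInterval Topology Topology.Homotopy
open GenLoop
variable {n : ℕ}

/-! ### The explicit loops -/

/-- The vector given by a field. -/
def vc (V : (Fin n → ℝ) → ℝ × (Fin n → ℝ)) (y : I^(Fin n)) : Fin (n+1) → ℝ :=
  Fin.cons (V (cc y)).1 (V (cc y)).2

theorem Fld.vc_ne {V : (Fin n → ℝ) → ℝ × (Fin n → ℝ)} (hV : Fld V) (y : I^(Fin n)) : vc V y ≠ 0 := by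
  intro h
  refine hV.ne (cc y) (cc_mem y) (Prod.ext ?_ (funext fun i => ?_))
  · exact congrFun h 0
  · exact congrFun h i.succ

theorem Fld.vc_cont {V : (Fin n → ℝ) → ℝ × (Fin n → ℝ)} (hV : Fld V) : Continuous (vc V) := by
  have h : Continuous fun y => V (cc y) := hV.diff.continuous.comp continuous_cc
  refine continuous_pi fun i => ?_
  refine Fin.cases ?_ (fun i => ?_) i
  · exact h.fst
  · exact (continuous_apply i).comp h.snd

/-- The vector orthogonal to the base vector. -/
def fv (i : Fin n) : Fin (n+1) → ℝ := Pi.single i.succ 1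

theorem fv_ne (i : Fin n) : fv i ≠ 0 := by
  intro h
  have := congrFun h i.succ
  simp [fv] at this

theorem fv_cons (i : Fin n) : fv i = Fin.cons 0 (Pi.single i 1) := by
  funext k
  refine Fin.cases ?_ (fun k => ?_) k
  · simp [fv, Fin.succ_ne_zero]
  · simp [fv, Pi.single_apply]

theorem fv_fix (i : Fin n) : refl (fv i) *ᵥ Pi.single 0 1 = Pi.single 0 1 := by
  apply refl_fix
  simp [fv]

/-- The map to the special orthogonal group. -/
noncomputable def rl {V : (Fin n → ℝ) → ℝ × (Fin n → ℝ)} (hV : Fld V) (i : Fin n) (y : I^(Fin n)) : SOg n :=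
  rot (vc V y) (fv i) (hV.vc_ne y) (fv_ne i)

theorem rl_cont {V : (Fin n → ℝ) → ℝ × (Fin n → ℝ)} (hV : Fld V) (i : Fin n) : Continuous (rl hV i) :=
  continuous_rot hV.vc_cont continuous_const _ _

theorem rl_apply {V : (Fin n → ℝ) → ℝ × (Fin n → ℝ)} (hV : Fld V) (i : Fin n) (y : I^(Fin n)) :
    (rl hV i y).1 *ᵥ Pi.single 0 1 = refl (vc V y) *ᵥ Pi.single 0 1 := by
  change (refl (vc V y) * refl (fv i)) *ᵥ _ = _
  rw [← Matrix.mulVec_mulVec, fv_fix]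

theorem rl_one {V : (Fin n → ℝ) → ℝ × (Fin n → ℝ)} (hV : Fld V) (i : Fin n) (y : I^(Fin n)) {c : ℝ}
    (hc : c ≠ 0) (h : V (cc y) = (0, c • Pi.single i 1)) : rl hV i y = 1 := by
  refine rot_eq_one _ _ hc ?_
  rw [fv_cons, vc, h]
  funext k
  refine Fin.cases ?_ (fun k => ?_) k <;> simp

theorem T_bdy (i0 : Fin n) {y : I^(Fin n)} (hy : y ∈ Cube.boundary (Fin n)) : rl (XF_fld i0) i0 y = 1 := by
  refine rl_one _ _ _ (c := ss (cc y) - 1/2) ?_ (XF_bdy i0 (cc_bdy hy))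
  have := ss_bdy (cc_bdy hy)
  intro h
  linarith

/-- The loop in the special orthogonal group. -/
noncomputable def TL (i0 : Fin n) : Ω^ (Fin n) (SOg n) 1 :=
  ⟨⟨rl (XF_fld i0) i0, rl_cont _ _⟩, fun _ hy => T_bdy i0 hy⟩

theorem tl_cc (y : I^(Fin (n+1))) : tl (cc y) = cc (tlI y) := rfl

theorem H_rest (i0 : Fin n) {y : I^(Fin (n+1))} (hy : y 0 = 1 ∨ tlI y ∈ Cube.boundary (Fin n)) :
    rl (WF_fld i0) i0.succ y = 1 := by
  rcases hy with hy | hy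
  · refine rl_one _ _ _ (c := 1) one_ne_zero ?_
    have : cc y 0 = 1 := by simp [cc, hy]
    simp [WF, this]
  · have hb := cc_bdy hy
    have h1 := ss_bdy hb
    have h2 := (y 0).2.1
    have h3 := (y 0).2.2
    refine rl_one _ _ _ (c := (1 - cc y 0) * (ss (cc (tlI y)) - 1/2) + cc y 0) ?_ ?_
    · change (1 - (y 0 : ℝ)) * (ss (cc (tlI y)) - 1/2) + (y 0 : ℝ) ≠ 0
      apply ne_of_gt
      nlinarith
    · unfold WF
      rw [tl_cc, XF_bdy i0 hb, bb_bdy hb]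
      refine Prod.ext (by simp) (funext fun k => ?_)
      refine Fin.cases ?_ (fun k => ?_) k
      · simp [Fin.succ_ne_zero]
      · simp [Pi.single_apply]
        split_ifs <;> ring

theorem H_face (i0 : Fin n) {j : C(SOg n, SOg (n+1))} (hj : ∀ A, (j A).1 = blk A.1)
    {y : I^(Fin (n+1))} (hy : y 0 = 0) : rl (WF_fld i0) i0.succ y = j (TL i0 (tlI y)) := by
  apply Subtype.ext
  rw [hj]
  change refl _ * refl _ = blk (refl _ * refl _)
  rw [blk_mul, ← refl_cons, ← refl_cons]
  have h1 : fv i0.succ = Fin.cons 0 (fv i0) := fv_cons _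
  have h2 : vc (WF i0) y = Fin.cons 0 (vc (XF i0) (tlI y)) := by
    have : cc y 0 = 0 := by simp [cc, hy]
    simp [vc, WF, this, tl_cc]
  rw [h1, h2]

theorem gen_top {b : S n} (hb : b = e0 n) (i0 : Fin n) (hn : Odd n) [Nonempty (Fin n)] (g : Ω^ (Fin n) (S n) b)
    (hg : ∀ y, ((g y : EuclideanSpace ℝ (Fin (n+1))) : Fin (n+1) → ℝ) = refl (vc (XF i0) y) *ᵥ Pi.single 0 1) :
    ∃ β : HomotopyGroup (Fin n) (S n) b, Subgroup.zpowers β = ⊤ ∧ cl g = β * β := by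
  subst hb
  obtain ⟨ι, hι⟩ := Lin_cls n
  refine ⟨ι⁻¹, ?_, ?_⟩
  · rw [Subgroup.zpowers_inv]
    exact zpowers_eq_top hι
  · exact ((XF_fld i0).cls g hg).unique (XF_cls i0 hn hι)

theorem gen_top' {b : S (n+1)} (hb : b = e0 (n+1)) (i0 : Fin n) (g : Ω^ (Fin (n+1)) (S (n+1)) b)
    (hg : ∀ y, ((g y : EuclideanSpace ℝ (Fin (n+1+1))) : Fin (n+1+1) → ℝ) = refl (vc (WF i0) y) *ᵥ Pi.single 0 1) :
    Subgroup.zpowers (cl g) = ⊤ := by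
  subst hb
  exact WF_gen i0 ((WF_fld i0).cls g hg)

theorem main [Nonempty (Fin n)] (hn : Odd n) (p : C(SOg n, S n))
    (hp : ∀ A, ((p A : EuclideanSpace ℝ (Fin (n+1))) : Fin (n+1) → ℝ) = A.1 *ᵥ Pi.single 0 1)
    (q : C(SOg (n+1), S (n+1)))
    (hq : ∀ A, ((q A : EuclideanSpace ℝ (Fin (n+1+1))) : Fin (n+1+1) → ℝ) = A.1 *ᵥ Pi.single 0 1)
    (j : C(SOg n, SOg (n+1))) (hj : ∀ A, (j A).1 = blk A.1)
    (δ : HomotopyGroup (Fin (n+1)) (S (n+1)) (q (j 1)) →* HomotopyGroup (Fin n) (SOg n) 1)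
    (hδ : ∀ z, piMap (N := Fin n) j z = 1 ↔ z ∈ Set.range δ)
    (α) (hα : Subgroup.zpowers α = ⊤) :
    ∃ β : HomotopyGroup (Fin n) (S n) (p 1), Subgroup.zpowers β = ⊤ ∧ piMap p (δ α) = β * β := by
  let i0 : Fin n := Classical.arbitrary _
  have hp1 : p 1 = e0 n := by
    apply Subtype.ext
    apply WithLp.ofLp_injective
    rw [hp]
    change (1 : Matrix (Fin (n+1)) (Fin (n+1)) ℝ) *ᵥ _ = _
    rw [Matrix.one_mulVec]
    simp [e0]
  obtain ⟨β, hβ, hT⟩ := gen_top hp1 i0 hn (postc p (TL i0)) (fun y => by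
    rw [postc_apply, hp]
    exact rl_apply (XF_fld i0) i0 y)
  let f : Ω^ (Fin (n+1)) (S (n+1)) (q (j 1)) :=
    ⟨⟨fun y => q (rl (WF_fld i0) i0.succ y), (map_continuous q).comp (rl_cont _ _)⟩, fun y hy => by
      change q (rl (WF_fld i0) i0.succ y) = _
      rcases bdyI_cases hy with e | e
      · rw [H_face i0 hj e, q_j hq hj, q_j hq hj]
      · rw [H_rest i0 e, j_one hj]⟩
  have hf : Subgroup.zpowers (cl f) = ⊤ := gen_top' (q_j hq hj 1) i0 f (fun y => by
    change (q (rl (WF_fld i0) i0.succ y) : EuclideanSpace ℝ (Fin (n+1+1))).ofLp = _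
    rw [hq]
    exact rl_apply _ _ _)
  have hR : Rel q j (cl f) (cl (TL i0)) :=
    ⟨_, _, f, ⟨rl_cont _ _, fun y hy => H_face i0 hj hy, fun y hy => H_rest i0 hy, fun y => rfl⟩, rfl, rfl⟩
  have hrange : Subgroup.zpowers (δ α) = Subgroup.zpowers (cl (TL i0)) := by
    apply le_antisymm
    · rw [Subgroup.zpowers_le]
      exact hR.ker hq hj hf ((hδ _).mpr ⟨α, rfl⟩)
    · rw [Subgroup.zpowers_le]
      obtain ⟨y, hy⟩ := (hδ _).mp (hR.mem_ker hj)
      have : y ∈ Subgroup.zpowers α := by rw [hα]; trivial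
      obtain ⟨k, rfl⟩ := this
      exact ⟨k, by rw [← hy]; exact (map_zpow δ α k).symm⟩
  refine exists_sq_generator β _ hβ ?_
  have h2 := congrArg (Subgroup.map (piHom p)) hrange
  rw [MonoidHom.map_zpowers, MonoidHom.map_zpowers] at h2
  rw [← hT]
  exact h2

end Steenrod

/-- Steenrod's theorem: for odd `n` (written `n = 2m+1`), in the fibration
`SO(n+1) → SO(n+2) → S^{n+1}` the composite
`π_{n+1}(S^{n+1}) —δ→ π_n(SO(n+1)) —p_*→ π_n(Sⁿ)` (with `p : SO(n+1) → Sⁿ` the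
canonical bundle `A ↦ A·e₀` and `δ` the connecting homomorphism, characterized
here by exactness in the long exact sequence of the fibration) sends a
generator to twice a generator. -/
theorem stmt13 (m : ℕ)
    -- `p : SO(n+1) → Sⁿ`, `A ↦ A e₀`, for `n = 2m+1`
    (p : C(Matrix.specialOrthogonalGroup (Fin (2*m+1+1)) ℝ,
          Metric.sphere (0 : EuclideanSpace ℝ (Fin (2*m+1+1))) 1))
    (hp : ∀ A, ((p A : EuclideanSpace ℝ (Fin (2*m+1+1))) : Fin (2*m+1+1) → ℝ) =
      A.1 *ᵥ (EuclideanSpace.single 0 1 : EuclideanSpace ℝ (Fin (2*m+1+1))))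
    -- `q : SO(n+2) → S^{n+1}`, `A ↦ A e₀`
    (q : C(Matrix.specialOrthogonalGroup (Fin (2*m+2+1)) ℝ,
          Metric.sphere (0 : EuclideanSpace ℝ (Fin (2*m+2+1))) 1))
    (hq : ∀ A, ((q A : EuclideanSpace ℝ (Fin (2*m+2+1))) : Fin (2*m+2+1) → ℝ) =
      A.1 *ᵥ (EuclideanSpace.single 0 1 : EuclideanSpace ℝ (Fin (2*m+2+1))))
    -- the block inclusion `j : SO(n+1) ↪ SO(n+2)`
    (j : C(Matrix.specialOrthogonalGroup (Fin (2*m+1+1)) ℝ,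
          Matrix.specialOrthogonalGroup (Fin (2*m+2+1)) ℝ))
    (hj : ∀ A, (j A).1 = fun i j' =>
      if hi : i = 0 then (if j' = 0 then (1:ℝ) else 0)
      else if hj' : j' = 0 then (0:ℝ) else A.1 (i.pred hi) (j'.pred hj'))
    -- the connecting homomorphism of the fibration, pinned down by exactness
    (δ : HomotopyGroup (Fin (2*m+2))
          (Metric.sphere (0 : EuclideanSpace ℝ (Fin (2*m+2+1))) 1) (q (j 1)) →*
        HomotopyGroup (Fin (2*m+1))
          (Matrix.specialOrthogonalGroup (Fin (2*m+1+1)) ℝ) 1)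
    (hexact_q : ∀ y, δ y = 1 ↔ y ∈ Set.range
      (piMap (N := Fin (2*m+2)) (x := (j 1 :
        Matrix.specialOrthogonalGroup (Fin (2*m+2+1)) ℝ)) q))
    (hexact_δ : ∀ z, piMap (N := Fin (2*m+1)) j z = 1 ↔ z ∈ Set.range δ) :
    ∀ α, Subgroup.zpowers α = ⊤ →
      ∃ β : HomotopyGroup (Fin (2*m+1))
        (Metric.sphere (0 : EuclideanSpace ℝ (Fin (2*m+1+1))) 1) (p 1),
        Subgroup.zpowers β = ⊤ ∧ piMap p (δ α) = β * β := by
  haveI : Nonempty (Fin (2*m+1)) := ⟨0⟩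
  have h1 : ∀ k : ℕ, ((EuclideanSpace.single 0 1 : EuclideanSpace ℝ (Fin (k+1))) : Fin (k+1) → ℝ) =
      Pi.single 0 1 := fun k => by simp
  exact Steenrod.main (n := 2*m+1) ⟨m, rfl⟩ p (fun A => by rw [hp A, h1]) q
    (fun A => by rw [← h1]; exact hq A) j hj δ hexact_δ
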